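/- arXiv:2209.09945 — 7 statements merged into one kernel-verified Lean document; each statement's English description precedes it below -/
import Mathlib

section
/- Let (P,≤) be a finite poset with a coloring κ : P → C. For every order filter F of P and every color c ∈ C, one has A_c(S_c(F)) = A_c(F). -/
/-- `F` is an order filter of the poset `α`: upward closed subset. -/
def IsOrderFilter {α : Type*} [PartialOrder α] (F : Set α) : Prop :=
  ∀ ⦃x y : α⦄, x ∈ F → x ≤ y → y ∈ F

/-- `A_c(F)`: the union of all order filters `F'` with `F' \ F ⊆ κ⁻¹({c})`. -/
def Aop {α C : Type*} [PartialOrder α] (κ : α → C) (c : C) (F : Set α) : Set α :=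
  ⋃₀ {F' : Set α | IsOrderFilter F' ∧ F' \ F ⊆ κ ⁻¹' {c}}

/-- `R_c(F)`: the intersection of all order filters `F'` with `F \ F' ⊆ κ⁻¹({c})`. -/
def Rop {α C : Type*} [PartialOrder α] (κ : α → C) (c : C) (F : Set α) : Set α :=
  ⋂₀ {F' : Set α | IsOrderFilter F' ∧ F \ F' ⊆ κ ⁻¹' {c}}

open Classical in
/-- `S_c(F) := (A_c(F) \ F) ∪ R_c(F)` if this is an order filter, and `F` otherwise. -/
noncomputable def Sop {α C : Type*} [PartialOrder α] (κ : α → C) (c : C) (F : Set α) : Set α :=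
  if IsOrderFilter ((Aop κ c F \ F) ∪ Rop κ c F) then (Aop κ c F \ F) ∪ Rop κ c F else F

/-!
`A_c(F)` depends on `F` only up to elements of color `c`: replacing `F` by a set differing from it
in such elements does not change which order filters `F'` satisfy `F' \ F ⊆ κ⁻¹({c})`. Passing
from `F` to `S_c(F)` adds elements of `A_c(F) \ F` and removes elements of `F \ R_c(F)`, all of
color `c`.
-/

section

variable {α C : Type*} [PartialOrder α] {κ : α → C} {c : C} {F G : Set α}

theorem Aop_subset_Aop_of_sdiff_subset (h : F \ G ⊆ κ ⁻¹' {c}) : Aop κ c F ⊆ Aop κ c G := by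
  rintro x ⟨F', ⟨hF', hF'F⟩, hx⟩
  have hF'G : F' \ G ⊆ κ ⁻¹' {c} := calc
    F' \ G ⊆ F' \ F ∪ F \ G := sdiff_triangle F' F G
    _ ⊆ κ ⁻¹' {c} := Set.union_subset hF'F h
  exact ⟨F', ⟨hF', hF'G⟩, hx⟩

theorem Aop_eq_Aop_of_symmDiff_subset (h : symmDiff F G ⊆ κ ⁻¹' {c}) :
    Aop κ c F = Aop κ c G := by
  obtain ⟨hFG, hGF⟩ := Set.union_subset_iff.mp h
  exact (Aop_subset_Aop_of_sdiff_subset hFG).antisymm (Aop_subset_Aop_of_sdiff_subset hGF)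

theorem Aop_sdiff_subset : Aop κ c F \ F ⊆ κ ⁻¹' {c} := by
  rintro x ⟨⟨F', ⟨_, hF'F⟩, hxF'⟩, hxF⟩
  exact hF'F ⟨hxF', hxF⟩

theorem sdiff_Rop_subset : F \ Rop κ c F ⊆ κ ⁻¹' {c} := by
  rintro x ⟨hxF, hxR⟩
  by_contra hxc
  exact hxR fun F' ⟨_, hFF'⟩ ↦ by_contra fun hxF' ↦ hxc (hFF' ⟨hxF, hxF'⟩)

theorem IsOrderFilter.Rop_subset (hF : IsOrderFilter F) : Rop κ c F ⊆ F :=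
  Set.sInter_subset_of_mem ⟨hF, by simp⟩

theorem IsOrderFilter.symmDiff_Sop_subset (hF : IsOrderFilter F) :
    symmDiff (Sop κ c F) F ⊆ κ ⁻¹' {c} := by
  unfold Sop
  split_ifs
  · refine Set.union_subset ?added ?removed
    case added => calc
      ((Aop κ c F \ F) ∪ Rop κ c F) \ F ⊆ Aop κ c F \ F := by
        rintro x ⟨hxA | hxR, hxF⟩
        exacts [hxA, (hxF (hF.Rop_subset hxR)).elim]
      _ ⊆ κ ⁻¹' {c} := Aop_sdiff_subset
    case removed => calc
      F \ ((Aop κ c F \ F) ∪ Rop κ c F) ⊆ F \ Rop κ c F :=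
        Set.sdiff_subset_sdiff_right Set.subset_union_right
      _ ⊆ κ ⁻¹' {c} := sdiff_Rop_subset
  · exact (symmDiff_self F).trans_le bot_le

end

theorem Aop_Sop_eq_general {α C : Type*} [PartialOrder α] (κ : α → C) (c : C)
    (F : Set α) (hF : IsOrderFilter F) :
    Aop κ c (Sop κ c F) = Aop κ c F :=
  Aop_eq_Aop_of_symmDiff_subset hF.symmDiff_Sop_subset

/-- For every order filter `F` of a finite colored poset and every color `c`,
`A_c(S_c(F)) = A_c(F)`. -/
theorem Aop_Sop_eq {α C : Type*} [PartialOrder α] [Fintype α] (κ : α → C) (c : C)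
    (F : Set α) (hF : IsOrderFilter F) :
    Aop κ c (Sop κ c F) = Aop κ c F :=
  Aop_Sop_eq_general κ c F hF
end

section
/- Let (P,≤) be a finite poset with a coloring κ : P → C. For every order filter F of P and every color c ∈ C, one has S_c(S_c(F)) = F; that is, the map S_c : 𝓕(P) → 𝓕(P) is an involution. -/
/-!
The sets `A_c(F)` and `R_c(F)` depend only on the part of `F` whose color is not `c`, and
`F ↦ (A_c(F) \ F) ∪ R_c(F)` leaves that part unchanged. So the second application of this map uses
the same bounds `R ⊆ F ⊆ A` as the first, and both applications are the relative complement in the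
interval `[R, A]`, which is an involution. Since the second application returns the order filter
`F`, the map `S_c` falls back to the identity either both times or never.
-/

/-- The set `(A_c(F) \ F) ∪ R_c(F)`, the value of `S_c(F)` whenever it is an order filter. It
inverts itself on every order filter, which isolates the algebra of `S_c` from its case split. -/
def colorToggle {α C : Type*} [PartialOrder α] (κ : α → C) (c : C) (F : Set α) : Set α :=
  (Aop κ c F \ F) ∪ Rop κ c F

theorem sdiff_sdiff_sup_sup_cancel {β : Type*} [GeneralizedBooleanAlgebra β] {a b x : β}
    (hax : a ≤ x) (hxb : x ≤ b) : (b \ (b \ x ⊔ a)) ⊔ a = x := by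
  rw [← sdiff_sdiff_left, sdiff_sdiff_eq_self hxb, sdiff_sup_cancel hax]

section ColoredPoset

variable {α C : Type*} [PartialOrder α] {κ : α → C} {c : C} {F G : Set α}

theorem IsOrderFilter.subset_Aop (hF : IsOrderFilter F) : F ⊆ Aop κ c F :=
  Set.subset_sUnion_of_mem ⟨hF, sdiff_self.trans_le bot_le⟩

theorem Aop_congr (h : F \ κ ⁻¹' {c} = G \ κ ⁻¹' {c}) : Aop κ c F = Aop κ c G := by
  have h_union : F ∪ κ ⁻¹' {c} = G ∪ κ ⁻¹' {c} := by
    rw [← Set.sdiff_union_self, h, Set.sdiff_union_self]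
  simp only [Aop, Set.sdiff_subset_iff, h_union]

theorem Rop_congr (h : F \ κ ⁻¹' {c} = G \ κ ⁻¹' {c}) : Rop κ c F = Rop κ c G := by
  have h_iff (F' : Set α) : F \ F' ⊆ κ ⁻¹' {c} ↔ G \ F' ⊆ κ ⁻¹' {c} := by
    rw [Set.sdiff_subset_comm, h, Set.sdiff_subset_comm]
  simp only [Rop, h_iff]

theorem IsOrderFilter.colorToggle_sdiff_preimage (hF : IsOrderFilter F) :
    colorToggle κ c F \ κ ⁻¹' {c} = F \ κ ⁻¹' {c} := by
  have hR : Rop κ c F \ κ ⁻¹' {c} = F \ κ ⁻¹' {c} :=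
    (Set.sdiff_subset_sdiff_left hF.Rop_subset).antisymm <|
      Set.subset_sdiff.2 ⟨Set.sdiff_subset_comm.1 sdiff_Rop_subset, Set.disjoint_sdiff_left⟩
  rw [colorToggle, Set.union_sdiff_distrib, Set.sdiff_eq_empty.2 Aop_sdiff_subset,
    Set.empty_union, hR]

theorem IsOrderFilter.colorToggle_colorToggle (hF : IsOrderFilter F) :
    colorToggle κ c (colorToggle κ c F) = F := by
  have h_off_color : colorToggle κ c F \ κ ⁻¹' {c} = F \ κ ⁻¹' {c} :=
    hF.colorToggle_sdiff_preimage
  calc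
    colorToggle κ c (colorToggle κ c F) = (Aop κ c F \ colorToggle κ c F) ∪ Rop κ c F := by
      rw [colorToggle, Aop_congr h_off_color, Rop_congr h_off_color]
    _ = F := sdiff_sdiff_sup_sup_cancel hF.Rop_subset hF.subset_Aop

theorem Sop_eq_colorToggle (h : IsOrderFilter (colorToggle κ c F)) :
    Sop κ c F = colorToggle κ c F :=
  if_pos h

theorem Sop_eq_self (h : ¬IsOrderFilter (colorToggle κ c F)) : Sop κ c F = F :=
  if_neg h

end ColoredPoset

theorem Sop_Sop_eq_general {α C : Type*} [PartialOrder α] (κ : α → C) (c : C)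
    (F : Set α) (hF : IsOrderFilter F) :
    Sop κ c (Sop κ c F) = F := by
  by_cases h : IsOrderFilter (colorToggle κ c F)
  · have h_twice : colorToggle κ c (colorToggle κ c F) = F := hF.colorToggle_colorToggle
    rw [Sop_eq_colorToggle h, Sop_eq_colorToggle (h_twice.symm ▸ hF), h_twice]
  · rw [Sop_eq_self h, Sop_eq_self h]

/-- For every order filter `F` of a finite colored poset and every color `c`,
`S_c(S_c(F)) = F`; that is, `S_c` is an involution on the set of order filters. -/
theorem Sop_Sop_eq {α C : Type*} [PartialOrder α] [Fintype α] (κ : α → C) (c : C)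
    (F : Set α) (hF : IsOrderFilter F) :
    Sop κ c (Sop κ c F) = F :=
  Sop_Sop_eq_general κ c F hF
end

section
/- Fix n ≥ 1 and let the symmetric group S_{2n} act on ℤ^{2n} by permuting coordinates. Let Ŵ := {w ∈ S_{2n} : w(2n+1−i) = 2n+1−w(i) for all i}, let λ ∈ ℤ^{2n} satisfy λ_1 ≥ λ_2 ≥ … ≥ λ_{2n}, and define π : ℤ^{2n} → ℤ^n by π(μ)_i := μ_i − μ_{2n+1−i} for 1 ≤ i ≤ n. Then for all μ₁, μ₂ ∈ Ŵλ := {w·λ : w ∈ Ŵ}, if π(μ₁) = π(μ₂) then μ₁ = μ₂. (This is the type A_{2n−1} instance of the statement that the restriction map is injective on the σ-fixed part Ŵλ of the Weyl group orbit through a dominant integral weight.) -/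
/-- The action of `S_N` (permutations of `Fin N`) on `ℤ^N`: `(w·μ)_i = μ_{w⁻¹(i)}`. -/
def permAct {N : ℕ} (w : Equiv.Perm (Fin N)) (μ : Fin N → ℤ) : Fin N → ℤ :=
  fun i => μ (w.symm i)

/-- `w ∈ Ŵ`: the permutation `w` of `{1,…,2n}` satisfies `w(2n+1−i) = 2n+1−w(i)`
for all `i` (in 0-indexed terms, `w` commutes with `Fin.rev`). -/
def InWhat (n : ℕ) (w : Equiv.Perm (Fin (2 * n))) : Prop :=
  ∀ i : Fin (2 * n), w i.rev = (w i).rev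

/-- The restriction map `π : ℤ^{2n} → ℤ^n`, `π(μ)_i = μ_i − μ_{2n+1−i}`. -/
def resMap (n : ℕ) (μ : Fin (2 * n) → ℤ) : Fin n → ℤ :=
  fun i => μ (Fin.castLE (by omega) i) - μ (Fin.castLE (by omega) i).rev

theorem eq_of_add_eq_add_of_antitone {ι M : Type*} [LinearOrder ι] [Add M] [PartialOrder M]
    [AddLeftStrictMono M] [AddRightStrictMono M] {f g : ι → M} (hf : Antitone f)
    (hg : Antitone g) {a b : ι} (h : f a + g a = f b + g b) : f a = f b := by
  rcases le_total a b with hab | hba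
  · exact ((add_eq_add_iff_eq_and_eq (hf hab) (hg hab)).mp h.symm).1.symm
  · exact ((add_eq_add_iff_eq_and_eq (hf hba) (hg hba)).mp h).1

/-- Since `lam` and `-lam ∘ r` are both antitone, the value of their sum at a point determines
`lam` there, and a map `w` commuting with `r` only changes the point of evaluation. -/
theorem resMap_injOn_hatW_orbit_general {ι G : Type*} [LinearOrder ι] [AddCommGroup G]
    [PartialOrder G] [IsOrderedAddMonoid G] {lam : ι → G} (hlam : Antitone lam)
    {r : ι → ι} (hr : Antitone r) :
    Set.InjOn (fun μ : ι → G ↦ μ - μ ∘ r) ((lam ∘ ·) '' {w | Function.Commute w r}) := by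
  rintro _ ⟨w₁, hw₁, rfl⟩ _ ⟨w₂, hw₂, rfl⟩ h
  funext i
  have hi : lam (w₁ i) - lam (r (w₁ i)) = lam (w₂ i) - lam (r (w₂ i)) := by
    simpa only [Pi.sub_apply, Function.comp_apply, hw₁.eq i, hw₂.eq i] using congrFun h i
  simp only [sub_eq_add_neg] at hi
  exact eq_of_add_eq_add_of_antitone hlam (hlam.comp hr).neg hi

theorem InWhat.commute_symm_rev {n : ℕ} {w : Equiv.Perm (Fin (2 * n))} (hw : InWhat n w) :
    Function.Commute w.symm Fin.rev :=
  Function.Semiconj.inverse_left (f := w) hw w.left_inv w.right_inv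

theorem mem_image_comp_commute_rev {n : ℕ} {lam μ : Fin (2 * n) → ℤ}
    (hμ : ∃ w : Equiv.Perm (Fin (2 * n)), InWhat n w ∧ μ = permAct w lam) :
    μ ∈ (lam ∘ ·) '' {w | Function.Commute w Fin.rev} := by
  obtain ⟨w, hw, rfl⟩ := hμ
  exact ⟨w.symm, hw.commute_symm_rev, rfl⟩

theorem sub_comp_rev_eq_iff_resMap_eq {n : ℕ} {μ ν : Fin (2 * n) → ℤ} :
    μ - μ ∘ Fin.rev = ν - ν ∘ Fin.rev ↔ resMap n μ = resMap n ν := by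
  refine ⟨fun h ↦ funext fun i ↦ congrFun h _, fun h ↦ funext fun i ↦ ?_⟩
  obtain hi | hi := lt_or_ge i.val n
  · exact congrFun h ⟨i, hi⟩
  · have hrev : i.rev.val < n := by grind
    have hreflected : μ i.rev - μ i.rev.rev = ν i.rev - ν i.rev.rev := congrFun h ⟨i.rev, hrev⟩
    rw [Fin.rev_rev] at hreflected
    simpa only [Pi.sub_apply, Function.comp_apply, neg_sub] using congrArg Neg.neg hreflected

/-- If `λ ∈ ℤ^{2n}` is weakly decreasing and `μ₁, μ₂ ∈ Ŵλ` satisfy `π(μ₁) = π(μ₂)`,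
then `μ₁ = μ₂`: the restriction map is injective on the σ-fixed part `Ŵλ` of the
Weyl group orbit (type `A_{2n−1}` folded to type `C_n`). -/
theorem resMap_injOn_hatW_orbit (n : ℕ) (hn : 1 ≤ n)
    (lam : Fin (2 * n) → ℤ) (hlam : ∀ i j : Fin (2 * n), i ≤ j → lam j ≤ lam i)
    (μ₁ μ₂ : Fin (2 * n) → ℤ)
    (h₁ : ∃ w : Equiv.Perm (Fin (2 * n)), InWhat n w ∧ μ₁ = permAct w lam)
    (h₂ : ∃ w : Equiv.Perm (Fin (2 * n)), InWhat n w ∧ μ₂ = permAct w lam)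
    (h : resMap n μ₁ = resMap n μ₂) :
    μ₁ = μ₂ := by
  exact resMap_injOn_hatW_orbit_general hlam Fin.rev_anti (mem_image_comp_commute_rev h₁)
    (mem_image_comp_commute_rev h₂) (sub_comp_rev_eq_iff_resMap_eq.mpr h)
end

section
/- Fix n ≥ 1 and let the symmetric group S_{2n} act on ℤ^{2n} by permuting coordinates. For μ, ν ∈ ℤ^{2n}, write μ ≤_s^A ν if there is a sequence μ = μ_0, μ_1, …, μ_k = ν such that each μ_{t+1} is obtained from μ_t by swapping two coordinates a < b with (μ_t)_a > (μ_t)_b. For ξ, η ∈ ℤ^n, write ξ ≤_s^C η if there is a sequence ξ = ξ_0, ξ_1, …, ξ_k = η in which each step is one of: (i) swap coordinates a < b when (ξ_t)_a > (ξ_t)_b; (ii) replace the pair ((ξ_t)_a, (ξ_t)_b) with a < b by (−(ξ_t)_b, −(ξ_t)_a) when (ξ_t)_a + (ξ_t)_b > 0; (iii) replace (ξ_t)_a by −(ξ_t)_a when (ξ_t)_a > 0. Let Ŵ := {w ∈ S_{2n} : w(2n+1−i) = 2n+1−w(i) for all i}, let λ ∈ ℤ^{2n} satisfy λ_1 ≥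 λ_2 ≥ … ≥ λ_{2n}, and define π : ℤ^{2n} → ℤ^n by π(μ)_i := μ_i − μ_{2n+1−i} for 1 ≤ i ≤ n. Then for all μ₁, μ₂ ∈ Ŵλ := {w·λ : w ∈ Ŵ}: μ₁ ≤_s^A μ₂ if and only if π(μ₁) ≤_s^C π(μ₂). -/
/-- One step of the strong order `≤_s^A` of type `A_{N−1}` on `ℤ^N`:
swap two coordinates `a < b` when `μ_a > μ_b`. -/
def stepA {N : ℕ} (μ ν : Fin N → ℤ) : Prop :=
  ∃ a b : Fin N, a < b ∧ μ b < μ a ∧ ν = μ ∘ Equiv.swap a b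

/-- The strong order `≤_s^A` on `ℤ^N`. -/
def leA {N : ℕ} : (Fin N → ℤ) → (Fin N → ℤ) → Prop :=
  Relation.ReflTransGen stepA

/-- One step of the strong order `≤_s^C` of type `C_N` on `ℤ^N`: either
(i) swap coordinates `a < b` when `ξ_a > ξ_b`; or
(ii) replace `(ξ_a, ξ_b)` (`a < b`) by `(−ξ_b, −ξ_a)` when `ξ_a + ξ_b > 0`; or
(iii) replace `ξ_a` by `−ξ_a` when `ξ_a > 0`. -/
def stepC {N : ℕ} (ξ η : Fin N → ℤ) : Prop :=
  (∃ a b : Fin N, a < b ∧ ξ b < ξ a ∧ η = ξ ∘ Equiv.swap a b) ∨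
  (∃ a b : Fin N, a < b ∧ 0 < ξ a + ξ b ∧
    η = fun k => if k = a then -ξ b else if k = b then -ξ a else ξ k) ∨
  (∃ a : Fin N, 0 < ξ a ∧ η = Function.update ξ a (-ξ a))

/-- The strong order `≤_s^C` on `ℤ^N`. -/
def leC {N : ℕ} : (Fin N → ℤ) → (Fin N → ℤ) → Prop :=
  Relation.ReflTransGen stepC

/-!
The order `leA` has a tableau criterion: `leA X Y` holds iff all superlevel sets of `X` and `Y` are
comparable in the Gale order. For `λ` decreasing, the superlevel sets of `λ + σ(λ)` are superlevel
sets of `λ` or their reversed complements, and reversed complementation preserves Gale comparison;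
hence `leA (w·λ) (v·λ)` is unchanged when `λ` is replaced by `λ + σ(λ)`, whose first `n` coordinates
are `π(λ)`.

It remains to compare `σ`-fixed weights. A type `C` step on the first `n` coordinates is a swap of
`j.rev` and `j`, or a swap of `i` and `j` followed by its mirror image; both are chains of type `A`
steps. Conversely, if `X` lies below `Y` in the tableau criterion, the greedy swap of `i` and `j`
that moves `X` towards `Y` can be followed by its mirror image unless both swaps change a common
prefix count; in that case the swap of `j.rev` and `j` moves `X` towards `Y`.
-/

section Reachability

open Finset

lemma reflTransGen_of_exists_step {α : Type*} {r s : α → α → Prop} {P : α → Prop} {y : α}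
    (hs : WellFounded (flip s))
    (step : ∀ x, P x → x ≠ y → ∃ x', P x' ∧ r x x' ∧ s x x') {x : α} (hx : P x) :
    Relation.ReflTransGen r x y := by
  induction x using hs.induction with
  | _ x ih =>
    by_cases hxy : x = y
    · exact hxy ▸ .refl
    · obtain ⟨x', hx', hr, hxx'⟩ := step x hx hxy
      exact .head hr (ih x' hxx' hx')

lemma sum_comp_swap_sub_sum {ι α M : Type*} [Fintype ι] [DecidableEq ι] [AddCommGroup M]
    (F : ι → α → M) (x : ι → α) {a b : ι} (hab : a ≠ b) :
    ∑ p, F p (x (Equiv.swap a b p)) - ∑ p, F p (x p) =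
      F a (x b) - F a (x a) + (F b (x a) - F b (x b)) := by
  rw [← sum_sub_distrib, Fintype.sum_eq_add a b hab, Equiv.swap_apply_left,
    Equiv.swap_apply_right]
  rintro p ⟨hpa, hpb⟩
  rw [Equiv.swap_apply_of_ne_of_ne hpa hpb, sub_self]

/-- Squared distance to the increasing vector `(0, 1, …, N - 1)`; it is the termination measure for
chains of `stepA`. -/
def energy {N : ℕ} (X : Fin N → ℤ) : ℤ := ∑ p : Fin N, (X p - (p : ℤ)) ^ 2

lemma energy_lt_of_stepA {N : ℕ} {X Y : Fin N → ℤ} (h : stepA X Y) : energy Y < energy X := by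
  obtain ⟨a, b, hab, hX, rfl⟩ := h
  have hdiff := sum_comp_swap_sub_sum (fun (p : Fin N) x => (x - (p : ℤ)) ^ 2) X hab.ne
  have hab' : (a : ℤ) < b := by exact_mod_cast hab
  simp only [energy, Function.comp_apply]
  nlinarith

lemma wellFounded_flip_stepA (N : ℕ) : WellFounded (flip (stepA (N := N))) := by
  refine Subrelation.wf (r := fun Y X => (energy Y).toNat < (energy X).toNat) ?_
    (measure fun X => (energy X).toNat).wf
  intro Y X h
  have hlt := energy_lt_of_stepA h
  have hpos : 0 ≤ energy Y := sum_nonneg fun _ _ => sq_nonneg _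
  omega

end Reachability

section Gale

open Finset

variable {N : ℕ} {A B : Finset (Fin N)}

/-- The number of elements of `A` among the first `k` indices. -/
def prefixCard (A : Finset (Fin N)) (k : ℕ) : ℕ := #{p ∈ A | p.val < k}

/-- The Gale order on subsets of `Fin N`: the `r`-th smallest element of `A` is at most that of `B`
for every `r`, which is encoded by comparing the counts on initial segments. -/
def GaleLE (A B : Finset (Fin N)) : Prop :=
  #A = #B ∧ ∀ k, prefixCard B k ≤ prefixCard A k

/-- The complement of the reversal of `A`. -/
def revCompl (A : Finset (Fin N)) : Finset (Fin N) := {p | p.rev ∉ A}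

@[simp] lemma mem_revCompl {p : Fin N} : p ∈ revCompl A ↔ p.rev ∉ A := by simp [revCompl]

lemma revCompl_revCompl (A : Finset (Fin N)) : revCompl (revCompl A) = A := by ext; simp

lemma prefixCard_zero (A : Finset (Fin N)) : prefixCard A 0 = 0 := by simp [prefixCard]

lemma prefixCard_self (A : Finset (Fin N)) : prefixCard A N = #A := by simp [prefixCard]

lemma prefixCard_eq_sum (A : Finset (Fin N)) (k : ℕ) :
    prefixCard A k = ∑ p : Fin N, if p.val < k ∧ p ∈ A then 1 else 0 := by
  rw [prefixCard, ← card_filter]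
  congr 1
  ext p
  simp [and_comm]

lemma prefixCard_revCompl_add_card (A : Finset (Fin N)) (k : ℕ) :
    prefixCard (revCompl A) k + #A =
      prefixCard (univ : Finset (Fin N)) k + prefixCard A (N - k) := by
  have hrev (B : Finset (Fin N)) :
      prefixCard B k = ∑ p : Fin N, if p.rev.val < k ∧ p.rev ∈ B then 1 else 0 := by
    rw [prefixCard_eq_sum]
    exact (Equiv.sum_comp Fin.revPerm fun p : Fin N => if p.val < k ∧ p ∈ B then 1 else 0).symm
  rw [hrev (revCompl A), hrev univ, ← prefixCard_self A, prefixCard_eq_sum,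
    prefixCard_eq_sum, ← sum_add_distrib, ← sum_add_distrib]
  refine sum_congr rfl fun p _ => ?_
  simp only [mem_revCompl, Fin.rev_rev, Fin.val_rev, mem_univ]
  grind

lemma GaleLE.refl (A : Finset (Fin N)) : GaleLE A A := ⟨rfl, fun _ => le_rfl⟩

lemma GaleLE.revCompl (h : GaleLE A B) : GaleLE (revCompl A) (revCompl B) := by
  have hA := prefixCard_revCompl_add_card A
  have hB := prefixCard_revCompl_add_card B
  refine ⟨?_, fun k => ?_⟩
  · have hAN := hA N
    have hBN := hB N
    simp only [Nat.sub_self, prefixCard_self, prefixCard_zero] at hAN hBN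
    have := h.1
    omega
  · have := hA k
    have := hB k
    have := h.1
    have := h.2 (N - k)
    omega

lemma revCompl_map {w : Equiv.Perm (Fin N)} (hw : ∀ i, w i.rev = (w i).rev)
    (A : Finset (Fin N)) : revCompl (A.map w.toEmbedding) = (revCompl A).map w.toEmbedding := by
  ext p
  obtain ⟨q, rfl⟩ := w.surjective p
  simp [← hw]

end Gale

section Dominance

open Finset

variable {N : ℕ} {X Y : Fin N → ℤ}

/-- The set of indices at which `X` takes a value at least `t`. -/
def superlevel (X : Fin N → ℤ) (t : ℤ) : Finset (Fin N) := {p | t ≤ X p}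

@[simp] lemma mem_superlevel {t : ℤ} {p : Fin N} : p ∈ superlevel X t ↔ t ≤ X p := by
  simp [superlevel]

/-- The tableau criterion for `leA X Y`: all superlevel sets of `X` and `Y` are comparable in the
Gale order. -/
def Dominates (X Y : Fin N → ℤ) : Prop :=
  ∀ t, GaleLE (superlevel X t) (superlevel Y t)

lemma Dominates.refl (X : Fin N → ℤ) : Dominates X X := fun _ => .refl _

lemma Dominates.trans {Z : Fin N → ℤ} (hXY : Dominates X Y) (hYZ : Dominates Y Z) :
    Dominates X Z := fun t =>
  ⟨(hXY t).1.trans (hYZ t).1, fun k => ((hYZ t).2 k).trans ((hXY t).2 k)⟩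

lemma prefixCard_superlevel_comp_swap {a b : Fin N} (hab : a < b) (hX : X b < X a) (k : ℕ)
    (t : ℤ) :
    prefixCard (superlevel (X ∘ Equiv.swap a b) t) k +
        (if (a.val < k ∧ k ≤ b.val) ∧ X b < t ∧ t ≤ X a then 1 else 0) =
      prefixCard (superlevel X t) k := by
  have hdiff := sum_comp_swap_sub_sum
    (fun (p : Fin N) x => if p.val < k ∧ t ≤ x then (1 : ℤ) else 0) X hab.ne
  zify
  simp only [prefixCard_eq_sum, mem_superlevel, Function.comp_apply, Nat.cast_sum, Nat.cast_ite,
    Nat.cast_one, Nat.cast_zero]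
  rw [sub_eq_iff_eq_add.1 hdiff]
  split_ifs <;> omega

lemma dominates_of_stepA (h : stepA X Y) : Dominates X Y := by
  obtain ⟨a, b, hab, hX, rfl⟩ := h
  refine fun t => ⟨?_, fun k => ?_⟩
  · have := prefixCard_superlevel_comp_swap hab hX N t
    rw [if_neg (by omega), add_zero, prefixCard_self, prefixCard_self] at this
    exact this.symm
  · exact (Nat.le_add_right _ _).trans_eq (prefixCard_superlevel_comp_swap hab hX k t)

lemma dominates_of_leA (h : leA X Y) : Dominates X Y := by
  induction h with
  | refl => exact .refl _
  | tail _ hstep ih => exact ih.trans (dominates_of_stepA hstep)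

lemma Dominates.comp_swap (h : Dominates X Y) {a b : Fin N} (hab : a < b) (hX : X b < X a)
    (hstrict : ∀ (k : ℕ) (t : ℤ), a.val < k → k ≤ b.val → X b < t → t ≤ X a →
      prefixCard (superlevel Y t) k < prefixCard (superlevel X t) k) :
    Dominates (X ∘ Equiv.swap a b) Y := by
  refine fun t => ⟨?_, fun k => ?_⟩
  · exact (dominates_of_stepA ⟨a, b, hab, hX, rfl⟩ t).1.symm.trans (h t).1
  · have hswap := prefixCard_superlevel_comp_swap hab hX k t
    have hle := (h t).2 k
    have hlt := hstrict k t
    split_ifs at hswap <;> omega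

/-- The swap of `i` and `j` moves `X` towards `Y`: `i` is the first index at which `X` and `Y`
disagree and, among the values of `X` to its right, `X j` is the first one in `[Y i, X i)`. -/
structure IsPivot (X Y : Fin N → ℤ) (i j : Fin N) : Prop where
  lt : i < j
  eq_of_lt : ∀ p < i, X p = Y p
  le_apply : Y i ≤ X j
  apply_lt : X j < X i
  le_of_between : ∀ p, i < p → p < j → Y i ≤ X p → X i ≤ X p

lemma Dominates.apply_lt_of_first_ne (h : Dominates X Y) {i : Fin N} (hi : X i ≠ Y i)
    (hpre : ∀ p < i, X p = Y p) : Y i < X i := by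
  by_contra! hle
  refine ((h (Y i)).2 (i + 1)).not_gt (card_lt_card ?_)
  refine (ssubset_iff_of_subset fun p hp => ?_).2 ⟨i, by simp, by simp; omega⟩
  simp only [mem_filter, mem_superlevel] at hp ⊢
  rcases lt_trichotomy p i with hpi | rfl | hpi
  · rw [← hpre p hpi]
    exact hp
  · omega
  · omega

lemma Dominates.prefixCard_lt_of_gap (h : Dominates X Y) {i : Fin N}
    (hpre : ∀ p < i, X p = Y p) {k : ℕ} (hik : i.val < k)
    (hgap : ∀ p, i < p → p.val < k → Y i ≤ X p → X i ≤ X p) {t : ℤ} (ht : Y i < t)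
    (ht' : t ≤ X i) :
    prefixCard (superlevel Y t) k < prefixCard (superlevel X t) k := by
  -- Raising the level from `Y i` to `t` discards the band `[Y i, t)`, which `Y` meets more often
  -- than `X` does among the first `k` indices.
  have hsplit (Z : Fin N → ℤ) : prefixCard (superlevel Z (Y i)) k =
      prefixCard (superlevel Z t) k + #{p | p.val < k ∧ Y i ≤ Z p ∧ Z p < t} := by
    rw [prefixCard, prefixCard, ← card_filter_add_card_filter_not (t ≤ Z ·)]
    congr 2 <;> ext p <;>
      simp only [mem_filter, mem_superlevel, mem_univ, true_and] <;> omega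
  have hband : #{p | p.val < k ∧ Y i ≤ X p ∧ X p < t} <
      #{p | p.val < k ∧ Y i ≤ Y p ∧ Y p < t} := by
    refine card_lt_card ((ssubset_iff_of_subset fun p hp => ?_).2
      ⟨i, by simp; omega, by simp; omega⟩)
    simp only [mem_filter, mem_univ, true_and] at hp ⊢
    rcases lt_trichotomy p i with hpi | rfl | hpi
    · rw [← hpre p hpi]
      exact hp
    · omega
    · have := hgap p hpi hp.1 hp.2.1
      omega
  have := hsplit X
  have := hsplit Y
  have := (h (Y i)).2 k
  omega

lemma Dominates.exists_isPivot (h : Dominates X Y) (hne : X ≠ Y) : ∃ i j, IsPivot X Y i j := by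
  obtain ⟨i, hi, hmin⟩ := wellFounded_lt.has_min {i | X i ≠ Y i} (Function.ne_iff.1 hne)
  have hpre : ∀ p < i, X p = Y p := fun p hp => not_not.1 fun hc => hmin p hc hp
  have hlt := h.apply_lt_of_first_ne hi hpre
  have hex : {j | i < j ∧ Y i ≤ X j ∧ X j < X i}.Nonempty := by
    by_contra! hempty
    have hgap (p : Fin N) (hp : i < p) (_ : p.val < N) (hYp : Y i ≤ X p) : X i ≤ X p := by
      by_contra! hc
      exact hempty.subset ⟨hp, hYp, hc⟩
    have := h.prefixCard_lt_of_gap hpre i.isLt hgap hlt le_rfl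
    rw [prefixCard_self, prefixCard_self, (h _).1] at this
    exact this.false
  obtain ⟨j, ⟨hij, hYj, hXj⟩, hjmin⟩ := wellFounded_lt.has_min _ hex
  exact ⟨i, j, hij, hpre, hYj, hXj,
    fun p hip hpj hYp => not_lt.1 fun hc => hjmin p ⟨hip, hYp, hc⟩ hpj⟩

lemma IsPivot.prefixCard_lt {i j : Fin N} (hij : IsPivot X Y i j) (h : Dominates X Y) {k : ℕ}
    {t : ℤ} (hik : i.val < k) (hkj : k ≤ j.val) (ht : X j < t) (ht' : t ≤ X i) :
    prefixCard (superlevel Y t) k < prefixCard (superlevel X t) k :=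
  h.prefixCard_lt_of_gap hij.eq_of_lt hik
    (fun p hip hpk => hij.le_of_between p hip (Fin.lt_def.2 (hpk.trans_le hkj)))
    (hij.le_apply.trans_lt ht) ht'

lemma leA_of_dominates (h : Dominates X Y) : leA X Y := by
  refine reflTransGen_of_exists_step (P := (Dominates · Y)) (wellFounded_flip_stepA N) ?_ h
  intro X hX hne
  obtain ⟨i, j, hij⟩ := hX.exists_isPivot hne
  have hstep : stepA X (X ∘ Equiv.swap i j) := ⟨i, j, hij.lt, hij.apply_lt, rfl⟩
  exact ⟨_, hX.comp_swap hij.lt hij.apply_lt fun _ _ => hij.prefixCard_lt hX, hstep, hstep⟩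

theorem leA_iff_dominates : leA X Y ↔ Dominates X Y := ⟨dominates_of_leA, leA_of_dominates⟩

end Dominance

section Symmetrization

open Finset

variable {N : ℕ}

/-- Weights fixed by the diagram automorphism `σ(μ)_i = −μ_{N+1−i}`. -/
def IsSigmaFixed (X : Fin N → ℤ) : Prop := ∀ p, X p.rev = -X p

/-- The weight `μ + σ(μ)`. -/
def symmetrize (μ : Fin N → ℤ) : Fin N → ℤ := fun p => μ p - μ p.rev

lemma isSigmaFixed_symmetrize (μ : Fin N → ℤ) : IsSigmaFixed (symmetrize μ) := fun p => by
  simp [symmetrize]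

lemma symmetrize_permAct {w : Equiv.Perm (Fin N)} (hw : ∀ i, w i.rev = (w i).rev)
    (μ : Fin N → ℤ) : symmetrize (permAct w μ) = permAct w (symmetrize μ) := by
  funext p
  have hsymm : w.symm p.rev = (w.symm p).rev := by
    rw [Equiv.symm_apply_eq, hw, Equiv.apply_symm_apply]
  simp only [symmetrize, permAct, hsymm]

lemma superlevel_permAct (w : Equiv.Perm (Fin N)) (μ : Fin N → ℤ) (t : ℤ) :
    superlevel (permAct w μ) t = (superlevel μ t).map w.toEmbedding := by
  ext p
  simp [permAct, mem_map_equiv]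

variable {lam : Fin N → ℤ} {t : ℤ}

lemma exists_superlevel_symmetrize_eq (hlam : Antitone lam)
    (hne : (superlevel lam t).Nonempty) :
    ∃ s, superlevel (symmetrize lam) s = superlevel lam t := by
  obtain ⟨i, hi, hmin⟩ := exists_min_image _ (symmetrize lam) hne
  refine ⟨symmetrize lam i, ext fun p => ⟨fun hp => ?_, fun hp => mem_superlevel.2 (hmin p hp)⟩⟩
  by_contra hpt
  simp only [mem_superlevel, symmetrize] at hi hp hpt
  have hip : i ≤ p := (hlam.reflect_lt (by omega : lam p < lam i)).le
  have := hlam (Fin.rev_le_rev.2 hip)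
  omega

lemma exists_superlevel_eq_or_eq_revCompl (hlam : Antitone lam)
    (hne : (superlevel (symmetrize lam) t).Nonempty)
    (hne' : (superlevel (symmetrize lam) t)ᶜ.Nonempty) :
    ∃ s, superlevel lam s = superlevel (symmetrize lam) t ∨
      superlevel lam s = revCompl (superlevel (symmetrize lam) t) := by
  set S := superlevel (symmetrize lam) t with hS
  have hlast (p) (hp : p ∈ S) : p ≤ S.max' hne := S.le_max' p hp
  have hfirst (p) (hp : p ∉ S) : Sᶜ.min' hne' ≤ p := Sᶜ.min'_le p (mem_compl.2 hp)
  have hi := S.max'_mem hne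
  have hj := mem_compl.1 (Sᶜ.min'_mem hne')
  generalize S.max' hne = i at hi hlast
  generalize Sᶜ.min' hne' = j at hj hfirst
  by_cases hji : lam j < lam i
  · refine ⟨lam i, .inl (ext fun p => ⟨fun hp => ?_, fun hp => ?_⟩)⟩
    · by_contra hpS
      exact (mem_superlevel.1 hp).not_gt ((hlam (hfirst p hpS)).trans_lt hji)
    · exact mem_superlevel.2 (hlam (hlast p hp))
  · have hrev : lam i.rev < lam j.rev := by
      simp only [hS, mem_superlevel, symmetrize] at hi hj
      omega
    refine ⟨lam j.rev, .inr (ext fun p => ?_)⟩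
    rw [mem_superlevel, mem_revCompl]
    refine ⟨fun hp hpS => ?_, fun hpS => ?_⟩
    · have := hlam (Fin.rev_le_iff.1 (hlast _ hpS))
      omega
    · exact hlam (Fin.le_rev_iff.1 (hfirst _ hpS))

lemma dominates_permAct_symmetrize_iff (hlam : Antitone lam) {w v : Equiv.Perm (Fin N)}
    (hw : ∀ i, w i.rev = (w i).rev) (hv : ∀ i, v i.rev = (v i).rev) :
    Dominates (permAct w (symmetrize lam)) (permAct v (symmetrize lam)) ↔
      Dominates (permAct w lam) (permAct v lam) := by
  simp only [Dominates, superlevel_permAct]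
  refine ⟨fun h t => ?_, fun h t => ?_⟩
  · rcases (superlevel lam t).eq_empty_or_nonempty with hS | hne
    · simpa only [hS, map_empty] using .refl ∅
    · obtain ⟨s, hs⟩ := exists_superlevel_symmetrize_eq hlam hne
      exact hs ▸ h s
  · rcases (superlevel (symmetrize lam) t).eq_empty_or_nonempty with hS | hne
    · simpa only [hS, map_empty] using .refl ∅
    rcases (superlevel (symmetrize lam) t)ᶜ.eq_empty_or_nonempty with hS | hne'
    · simpa only [(compl_eq_empty_iff _).1 hS, map_univ_equiv] using .refl univ
    obtain ⟨s, hs | hs⟩ := exists_superlevel_eq_or_eq_revCompl hlam hne hne'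
    · exact hs ▸ h s
    · have hrev := (h s).revCompl
      rwa [revCompl_map hw, revCompl_map hv, hs, revCompl_revCompl] at hrev

end Symmetrization

section SigmaFixed

variable {N : ℕ} {X Y : Fin N → ℤ}

lemma IsSigmaFixed.comp_perm (hX : IsSigmaFixed X) {w : Equiv.Perm (Fin N)}
    (hw : ∀ i, w i.rev = (w i).rev) : IsSigmaFixed (X ∘ w) := fun p => by
  rw [Function.comp_apply, hw, hX, Function.comp_apply]

lemma IsSigmaFixed.revCompl_superlevel (hX : IsSigmaFixed X) (t : ℤ) :
    revCompl (superlevel X t) = superlevel X (1 - t) := by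
  ext p
  rw [mem_revCompl, mem_superlevel, mem_superlevel, hX]
  omega

lemma Dominates.prefixCard_add_prefixCard_reflect (h : Dominates X Y) (hX : IsSigmaFixed X)
    (hY : IsSigmaFixed Y) (k : ℕ) (t : ℤ) :
    prefixCard (superlevel X t) k + prefixCard (superlevel Y (1 - t)) (N - k) =
      prefixCard (superlevel Y t) k + prefixCard (superlevel X (1 - t)) (N - k) := by
  have hXk := prefixCard_revCompl_add_card (superlevel X (1 - t)) k
  have hYk := prefixCard_revCompl_add_card (superlevel Y (1 - t)) k
  rw [hX.revCompl_superlevel, sub_sub_cancel] at hXk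
  rw [hY.revCompl_superlevel, sub_sub_cancel] at hYk
  have := (h (1 - t)).1
  omega

lemma swap_rev_rev (a b p : Fin N) :
    Equiv.swap a.rev b.rev p.rev = (Equiv.swap a b p).rev :=
  Fin.rev_injective.swap_apply a b p

lemma swap_self_rev_rev (a p : Fin N) :
    Equiv.swap a a.rev p.rev = (Equiv.swap a a.rev p).rev := by
  rw [← swap_rev_rev, Fin.rev_rev, Equiv.swap_comm]

/-- The `σ`-equivariant version of the transposition of `a` and `b`. -/
def foldedSwap (a b : Fin N) : Equiv.Perm (Fin N) := Equiv.swap a b * Equiv.swap b.rev a.rev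

end SigmaFixed

section Folding

variable {n : ℕ} {X Y : Fin (2 * n) → ℤ} {a b : Fin (2 * n)}

lemma rev_ne_self (p : Fin (2 * n)) : p.rev ≠ p := fun h => by
  have := congrArg Fin.val h
  rw [Fin.val_rev] at this
  omega

lemma foldedSwap_rev (hab : a ≠ b.rev) (p : Fin (2 * n)) :
    foldedSwap a b p.rev = (foldedSwap a b p).rev := by
  have hba : a.rev ≠ b := fun h => hab (Fin.rev_eq_iff.1 h)
  have hcomm : foldedSwap a b = Equiv.swap b.rev a.rev * Equiv.swap a b := by
    rw [foldedSwap, Equiv.mul_swap_eq_swap_mul,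
      Equiv.swap_apply_of_ne_of_ne hab.symm (rev_ne_self b),
      Equiv.swap_apply_of_ne_of_ne (rev_ne_self a) hba]
  calc foldedSwap a b p.rev = Equiv.swap a b (Equiv.swap b.rev a.rev p.rev) := rfl
    _ = Equiv.swap b a (Equiv.swap a b p).rev := by rw [swap_rev_rev, Equiv.swap_comm a b]
    _ = (Equiv.swap b.rev a.rev (Equiv.swap a b p)).rev := by
      rw [← swap_rev_rev b.rev a.rev, Fin.rev_rev, Fin.rev_rev]
    _ = (foldedSwap a b p).rev := by rw [hcomm, Equiv.Perm.mul_apply]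

lemma IsSigmaFixed.comp_swap_apply_rev (hX : IsSigmaFixed X) (hab : a ≠ b.rev) :
    (X ∘ Equiv.swap a b) a.rev = -X a ∧ (X ∘ Equiv.swap a b) b.rev = -X b := by
  have hba : a.rev ≠ b := fun h => hab (Fin.rev_eq_iff.1 h)
  rw [Function.comp_apply, Function.comp_apply,
    Equiv.swap_apply_of_ne_of_ne (rev_ne_self a) hba,
    Equiv.swap_apply_of_ne_of_ne hab.symm (rev_ne_self b), hX, hX]
  exact ⟨rfl, rfl⟩

lemma IsSigmaFixed.transGen_stepA_foldedSwap (hX : IsSigmaFixed X) (hab : a < b)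
    (hne : a ≠ b.rev) (hlt : X b < X a) :
    Relation.TransGen stepA X (X ∘ foldedSwap a b) := by
  obtain ⟨ha, hb⟩ := hX.comp_swap_apply_rev hne
  exact .tail (.single ⟨a, b, hab, hlt, rfl⟩)
    ⟨b.rev, a.rev, Fin.rev_lt_rev.2 hab, by rw [ha, hb]; omega, rfl⟩

lemma IsSigmaFixed.stepA_swap_rev (hX : IsSigmaFixed X) (ha : a < a.rev) (hpos : 0 < X a) :
    stepA X (X ∘ Equiv.swap a a.rev) :=
  ⟨a, a.rev, ha, by rw [hX]; omega, rfl⟩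

/-- The inclusion of the first `n` indices; `lower k` and `(lower k).rev` together exhaust
`Fin (2 * n)`. -/
def lower (k : Fin n) : Fin (2 * n) := Fin.castLE (by omega) k

/-- The first `n` coordinates, which determine a `σ`-fixed weight. -/
def firstHalf (X : Fin (2 * n) → ℤ) : Fin n → ℤ := fun k => X (lower k)

lemma lower_injective : Function.Injective (lower (n := n)) :=
  Fin.castLE_injective (by omega)

lemma lower_lt_rev_lower (k l : Fin n) : lower k < (lower l).rev := by
  simp only [lower, Fin.lt_def, Fin.val_rev, Fin.val_castLE]
  omega

lemma exists_lower_eq_of_lt_rev (h : a < a.rev) : ∃ k, lower k = a := by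
  rw [Fin.lt_def, Fin.val_rev] at h
  exact ⟨⟨a, by omega⟩, rfl⟩

lemma exists_lower_eq_or_rev_lower_eq (a : Fin (2 * n)) :
    ∃ k, lower k = a ∨ (lower k).rev = a := by
  rcases (rev_ne_self a).lt_or_gt with h | h
  · obtain ⟨k, hk⟩ := exists_lower_eq_of_lt_rev (a := a.rev) (by rwa [Fin.rev_rev])
    exact ⟨k, .inr (by rw [hk, Fin.rev_rev])⟩
  · exact (exists_lower_eq_of_lt_rev h).imp fun _ => .inl

lemma IsSigmaFixed.eq_of_firstHalf_eq (hX : IsSigmaFixed X) (hY : IsSigmaFixed Y)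
    (h : firstHalf X = firstHalf Y) : X = Y := by
  funext p
  obtain ⟨k, rfl | rfl⟩ := exists_lower_eq_or_rev_lower_eq p
  · exact congrFun h k
  · rw [hX, hY]
    exact congrArg Neg.neg (congrFun h k)

lemma IsSigmaFixed.firstHalf_comp_swap_rev (hX : IsSigmaFixed X) (k : Fin n) :
    firstHalf (X ∘ Equiv.swap (lower k) (lower k).rev) =
      Function.update (firstHalf X) k (-firstHalf X k) := by
  funext l
  rcases eq_or_ne l k with rfl | hlk
  · rw [Function.update_self, firstHalf, Function.comp_apply, Equiv.swap_apply_left, hX, firstHalf]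
  · rw [Function.update_of_ne hlk, firstHalf, Function.comp_apply, Equiv.swap_apply_of_ne_of_ne
      (lower_injective.ne hlk) (lower_lt_rev_lower l k).ne, firstHalf]

lemma firstHalf_comp_foldedSwap (X : Fin (2 * n) → ℤ) (k l : Fin n) :
    firstHalf (X ∘ foldedSwap (lower k) (lower l)) = firstHalf X ∘ Equiv.swap k l := by
  funext m
  rw [firstHalf, Function.comp_apply, foldedSwap, Equiv.Perm.mul_apply,
    Equiv.swap_apply_of_ne_of_ne (lower_lt_rev_lower m l).ne (lower_lt_rev_lower m k).ne,
    lower_injective.swap_apply]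
  rfl

lemma IsSigmaFixed.firstHalf_comp_foldedSwap_rev (hX : IsSigmaFixed X) {k l : Fin n}
    (hkl : k ≠ l) :
    firstHalf (X ∘ foldedSwap (lower k) (lower l).rev) =
      fun m => if m = k then -firstHalf X l else if m = l then -firstHalf X k
        else firstHalf X m := by
  have hne : lower k ≠ lower l := lower_injective.ne hkl
  have hne_rev (m m' : Fin n) : lower m ≠ (lower m').rev := (lower_lt_rev_lower m m').ne
  funext m
  simp only [firstHalf, foldedSwap, Function.comp_apply, Equiv.Perm.mul_apply, Fin.rev_rev]
  split_ifs with hmk hml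
  · rw [hmk, Equiv.swap_apply_of_ne_of_ne hne (hne_rev _ _), Equiv.swap_apply_left, hX]
  · rw [hml, Equiv.swap_apply_left,
      Equiv.swap_apply_of_ne_of_ne (hne_rev _ _).symm (Fin.rev_injective.ne hne), hX]
  · rw [Equiv.swap_apply_of_ne_of_ne (lower_injective.ne hml) (hne_rev _ _),
      Equiv.swap_apply_of_ne_of_ne (lower_injective.ne hmk) (hne_rev _ _)]

lemma IsSigmaFixed.stepC_firstHalf_comp_swap_rev (hX : IsSigmaFixed X) (ha : a < a.rev)
    (hpos : 0 < X a) : stepC (firstHalf X) (firstHalf (X ∘ Equiv.swap a a.rev)) := by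
  obtain ⟨k, rfl⟩ := exists_lower_eq_of_lt_rev ha
  exact .inr (.inr ⟨k, hpos, hX.firstHalf_comp_swap_rev k⟩)

lemma IsSigmaFixed.stepC_firstHalf_comp_foldedSwap (hX : IsSigmaFixed X) (hab : a < b)
    (hab' : a < b.rev) (hlt : X b < X a) :
    stepC (firstHalf X) (firstHalf (X ∘ foldedSwap a b)) := by
  obtain ⟨k, rfl⟩ : ∃ k, lower k = a := by
    refine exists_lower_eq_of_lt_rev ?_
    simp only [Fin.lt_def, Fin.val_rev] at hab hab' ⊢
    omega
  obtain ⟨l, rfl | rfl⟩ := exists_lower_eq_or_rev_lower_eq b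
  · exact .inl ⟨k, l, hab, hlt, firstHalf_comp_foldedSwap X k l⟩
  · rw [Fin.rev_rev] at hab'
    rw [hX] at hlt
    refine .inr (.inl ⟨k, l, hab', ?_, hX.firstHalf_comp_foldedSwap_rev (ne_of_lt hab')⟩)
    simp only [firstHalf]
    omega

lemma IsSigmaFixed.exists_leA_of_stepC (hX : IsSigmaFixed X) {η : Fin n → ℤ}
    (h : stepC (firstHalf X) η) : ∃ Z, IsSigmaFixed Z ∧ leA X Z ∧ firstHalf Z = η := by
  obtain ⟨k, l, hkl, hlt, rfl⟩ | ⟨k, l, hkl, hlt, rfl⟩ | ⟨k, hpos, rfl⟩ := h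
  · have hne := (lower_lt_rev_lower k l).ne
    exact ⟨_, hX.comp_perm (foldedSwap_rev hne),
      (hX.transGen_stepA_foldedSwap hkl hne hlt).to_reflTransGen,
      firstHalf_comp_foldedSwap X k l⟩
  · have hne : lower k ≠ (lower l).rev.rev := by
      rw [Fin.rev_rev]
      exact ne_of_lt hkl
    refine ⟨_, hX.comp_perm (foldedSwap_rev hne),
      (hX.transGen_stepA_foldedSwap (lower_lt_rev_lower k l) hne ?_).to_reflTransGen,
      hX.firstHalf_comp_foldedSwap_rev hkl.ne⟩
    rw [hX]
    simp only [firstHalf] at hlt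
    omega
  · exact ⟨_, hX.comp_perm (swap_self_rev_rev _),
      .single (hX.stepA_swap_rev (lower_lt_rev_lower k k) hpos), hX.firstHalf_comp_swap_rev k⟩

lemma IsSigmaFixed.exists_leA_of_leC (hX : IsSigmaFixed X) {η : Fin n → ℤ}
    (h : leC (firstHalf X) η) : ∃ Z, IsSigmaFixed Z ∧ leA X Z ∧ firstHalf Z = η := by
  induction h with
  | refl => exact ⟨X, hX, .refl, rfl⟩
  | tail _ hstep ih =>
    obtain ⟨Z, hZ, hXZ, rfl⟩ := ih
    obtain ⟨Z', hZ', hZZ', hη⟩ := hZ.exists_leA_of_stepC hstep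
    exact ⟨Z', hZ', hXZ.trans hZZ', hη⟩

lemma IsSigmaFixed.leA_of_leC_firstHalf (hX : IsSigmaFixed X) (hY : IsSigmaFixed Y)
    (h : leC (firstHalf X) (firstHalf Y)) : leA X Y := by
  obtain ⟨Z, hZ, hXZ, hZY⟩ := hX.exists_leA_of_leC h
  exact hZ.eq_of_firstHalf_eq hY hZY ▸ hXZ

end Folding

section Descent

open Finset

variable {n : ℕ} {X Y : Fin (2 * n) → ℤ} {i j : Fin (2 * n)}

lemma IsPivot.le_rev (hij : IsPivot X Y i j) (h : Dominates X Y) (hX : IsSigmaFixed X)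
    (hY : IsSigmaFixed Y) : j ≤ i.rev := by
  have hne : X i ≠ Y i := (hij.le_apply.trans_lt hij.apply_lt).ne'
  have hi : i < i.rev := by
    refine (rev_ne_self i).symm.lt_of_le (not_lt.1 fun hlt => hne ?_)
    have := hij.eq_of_lt _ hlt
    rw [hX, hY] at this
    exact neg_injective this
  have hprefix : prefixCard (superlevel X (1 - X i)) i = prefixCard (superlevel Y (1 - X i)) i := by
    simp only [prefixCard]
    congr 1
    ext p
    simp only [mem_filter, mem_superlevel, and_congr_left_iff]
    exact fun hp => by rw [hij.eq_of_lt p hp]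
  have hreflect := h.prefixCard_add_prefixCard_reflect hX hY i (1 - X i)
  rw [hprefix, sub_sub_cancel] at hreflect
  by_contra! hlt
  rw [Fin.lt_def, Fin.val_rev] at hi hlt
  have := hij.prefixCard_lt h (k := 2 * n - i) (by omega) (by omega) hij.apply_lt le_rfl
  omega

lemma IsPivot.prefixCard_lt_reflect (hij : IsPivot X Y i j) (h : Dominates X Y)
    (hX : IsSigmaFixed X) (hY : IsSigmaFixed Y) {k : ℕ} {t : ℤ} (hjk : j.rev.val < k)
    (hki : k ≤ i.rev.val) (ht : -X i < t) (ht' : t ≤ -X j) :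
    prefixCard (superlevel Y t) k < prefixCard (superlevel X t) k := by
  rw [Fin.val_rev] at hjk hki
  have hreflect := h.prefixCard_add_prefixCard_reflect hX hY k t
  have := hij.prefixCard_lt h (k := 2 * n - k) (t := 1 - t)
    (by omega) (by omega) (by omega) (by omega)
  omega

lemma IsPivot.dominates_comp_swap_rev (hij : IsPivot X Y i j) (h : Dominates X Y)
    (hX : IsSigmaFixed X) (hY : IsSigmaFixed Y) (hj : j.rev < j) (hXj : X j < 0)
    (hXi : 0 < X i) : Dominates (X ∘ Equiv.swap j.rev j) Y := by
  have hrev := hX j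
  refine h.comp_swap hj (by omega) fun k t hk hk' ht ht' => ?_
  have hjr : j ≤ i.rev := hij.le_rev h hX hY
  by_cases hti : t ≤ X i
  · exact hij.prefixCard_lt h ((Fin.le_def.1 (Fin.le_rev_iff.1 hjr)).trans_lt hk) hk' ht hti
  · exact hij.prefixCard_lt_reflect h hX hY hk (hk'.trans hjr) (by omega) (by omega)

lemma IsPivot.dominates_comp_foldedSwap (hij : IsPivot X Y i j) (h : Dominates X Y)
    (hX : IsSigmaFixed X) (hY : IsSigmaFixed Y) (hne : i ≠ j.rev)
    (hsign : j < j.rev ∨ 0 ≤ X j ∨ X i ≤ 0) : Dominates (X ∘ foldedSwap i j) Y := by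
  obtain ⟨hXi, hXj⟩ := hX.comp_swap_apply_rev hne
  have hlt := hij.apply_lt
  have hswap : Dominates (X ∘ Equiv.swap i j) Y :=
    h.comp_swap hij.lt hlt fun _ _ => hij.prefixCard_lt h
  refine hswap.comp_swap (Fin.rev_lt_rev.2 hij.lt) (by omega) fun k t hk hk' ht ht' => ?_
  rw [hXj] at ht'
  rw [hXi] at ht
  -- The first swap changes the count at `(k, t)` only if `i < k ≤ j` and `X j < t ≤ X i`, which
  -- `hsign` makes incompatible with `j.rev < k ≤ i.rev` and `-X i < t ≤ -X j`.
  have hcount := prefixCard_superlevel_comp_swap hij.lt hlt k t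
  rw [if_neg (by omega), add_zero] at hcount
  rw [hcount]
  exact hij.prefixCard_lt_reflect h hX hY hk hk' ht ht'

lemma IsSigmaFixed.exists_stepC_of_dominates (hX : IsSigmaFixed X) (hY : IsSigmaFixed Y)
    (h : Dominates X Y) (hne : X ≠ Y) :
    ∃ Z, IsSigmaFixed Z ∧ Dominates Z Y ∧ stepC (firstHalf X) (firstHalf Z) ∧
      Relation.TransGen stepA X Z := by
  obtain ⟨i, j, hij⟩ := h.exists_isPivot hne
  have hijr : i ≤ j.rev := Fin.le_rev_iff.1 (hij.le_rev h hX hY)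
  by_cases hlong : j.rev < j ∧ X j < 0 ∧ 0 < X i
  · obtain ⟨hj, hXj, hXi⟩ := hlong
    have hj' : j.rev < j.rev.rev := by rwa [Fin.rev_rev]
    have hpos : 0 < X j.rev := by rw [hX]; omega
    refine ⟨X ∘ Equiv.swap j.rev j.rev.rev, hX.comp_perm (swap_self_rev_rev _), ?_,
      hX.stepC_firstHalf_comp_swap_rev hj' hpos, .single (hX.stepA_swap_rev hj' hpos)⟩
    rw [Fin.rev_rev]
    exact hij.dominates_comp_swap_rev h hX hY hj hXj hXi
  · have hij_ne : i ≠ j.rev := by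
      rintro rfl
      have := hij.apply_lt
      rw [hX] at this hlong
      exact hlong ⟨hij.lt, by omega, by omega⟩
    have hsign : j < j.rev ∨ 0 ≤ X j ∨ X i ≤ 0 := by
      have := (rev_ne_self j).symm.lt_or_gt
      omega
    exact ⟨X ∘ foldedSwap i j, hX.comp_perm (foldedSwap_rev hij_ne),
      hij.dominates_comp_foldedSwap h hX hY hij_ne hsign,
      hX.stepC_firstHalf_comp_foldedSwap hij.lt (hijr.lt_of_ne hij_ne) hij.apply_lt,
      hX.transGen_stepA_foldedSwap hij.lt hij_ne hij.apply_lt⟩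

lemma IsSigmaFixed.leC_firstHalf_of_dominates (hX : IsSigmaFixed X) (hY : IsSigmaFixed Y)
    (h : Dominates X Y) : leC (firstHalf X) (firstHalf Y) := by
  refine Relation.ReflTransGen.lift firstHalf (fun _ _ hstep => hstep) _ _
    (reflTransGen_of_exists_step (r := fun Z Z' => stepC (firstHalf Z) (firstHalf Z'))
      (s := Relation.TransGen stepA) (P := fun Z => IsSigmaFixed Z ∧ Dominates Z Y) ?_ ?_ ⟨hX, h⟩)
  · exact (wellFounded_flip_stepA _).transGen.mono fun _ _ => Relation.transGen_swap.2
  · rintro Z ⟨hZ, hZY⟩ hne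
    obtain ⟨Z', hZ', hdom, hstep, hdesc⟩ := hZ.exists_stepC_of_dominates hY hZY hne
    exact ⟨Z', ⟨hZ', hdom⟩, hstep, hdesc⟩

theorem IsSigmaFixed.leA_iff_leC_firstHalf (hX : IsSigmaFixed X) (hY : IsSigmaFixed Y) :
    leA X Y ↔ leC (firstHalf X) (firstHalf Y) :=
  ⟨fun h => hX.leC_firstHalf_of_dominates hY (dominates_of_leA h), hX.leA_of_leC_firstHalf hY⟩

end Descent

/-- For a weakly decreasing `λ ∈ ℤ^{2n}` and `μ₁, μ₂ ∈ Ŵλ`: `μ₁ ≤_s^A μ₂` iff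
`π(μ₁) ≤_s^C π(μ₂)` (the strong orders of type `A_{2n−1}` and of the folded
type `C_n` correspond under the restriction map). -/
theorem leA_iff_leC_resMap (n : ℕ) (hn : 1 ≤ n)
    (lam : Fin (2 * n) → ℤ) (hlam : ∀ i j : Fin (2 * n), i ≤ j → lam j ≤ lam i)
    (μ₁ μ₂ : Fin (2 * n) → ℤ)
    (h₁ : ∃ w : Equiv.Perm (Fin (2 * n)), InWhat n w ∧ μ₁ = permAct w lam)
    (h₂ : ∃ w : Equiv.Perm (Fin (2 * n)), InWhat n w ∧ μ₂ = permAct w lam) :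
    leA μ₁ μ₂ ↔ leC (resMap n μ₁) (resMap n μ₂) := by
  obtain ⟨w, hw, rfl⟩ := h₁
  obtain ⟨v, hv, rfl⟩ := h₂
  calc leA (permAct w lam) (permAct v lam)
      ↔ leA (permAct w (symmetrize lam)) (permAct v (symmetrize lam)) := by
        rw [leA_iff_dominates, leA_iff_dominates, dominates_permAct_symmetrize_iff hlam hw hv]
    _ ↔ leA (symmetrize (permAct w lam)) (symmetrize (permAct v lam)) := by
        rw [symmetrize_permAct hw, symmetrize_permAct hv]
    _ ↔ leC (resMap n (permAct w lam)) (resMap n (permAct v lam)) :=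
        (isSigmaFixed_symmetrize _).leA_iff_leC_firstHalf (isSigmaFixed_symmetrize _)
end

section
/- Fix integers n, m with 1 ≤ m ≤ n, let P := Y_{m,n−m+1} be the rectangular Young diagram poset, and let κ : P → {1,…,n}, κ((i,j)) := j − i + m, be its I-coloring. Then for all k, l ∈ {1,…,n} with |k − l| ≥ 2 and every order filter F of P, S_k(S_l(F)) = S_l(S_k(F)). -/
/-- The rectangular Young diagram poset `Y_{m,N}` (cells `(i,j)`, `1 ≤ i ≤ m`,
`1 ≤ j ≤ N`, with `(i₁,j₁) ≤ (i₂,j₂)` iff `i₁ ≥ i₂` and `j₁ ≥ j₂`), realized as the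
product of two dual finite chains. -/
abbrev YD (m N : ℕ) := (Fin m)ᵒᵈ × (Fin N)ᵒᵈ

/-- The `I`-coloring of `Y_{m, n−m+1}` for type `A_n`: `κ((i,j)) = j − i + m`
(in 1-indexed coordinates), with values in `{1,…,n}`. -/
def ykappa (m N : ℕ) (x : YD m N) : ℤ :=
  ((OrderDual.ofDual x.2 : Fin N) : ℤ) - ((OrderDual.ofDual x.1 : Fin m) : ℤ) + m

/-!
On the elements `x` of color `c`, the set `S_c(F)` depends only on the membership in `F` of `x` and
of its neighbors in the Hasse diagram; on all other elements it agrees with `F`. The coloring maps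
neighbors in the Hasse diagram to neighbors in the Dynkin diagram, so when `k` and `l` are not
adjacent there, `S_l` changes none of the data that decides what `S_k` does, and conversely. For
type `A_n` the Dynkin diagram is the path on `{1,…,n}`, encoded as part of the Hasse diagram of `ℤ`.
-/

section OrderFilter

variable {α C : Type*} [PartialOrder α] {κ : α → C} {c : C} {F G : Set α} {x : α}

theorem mem_Aop_iff : x ∈ Aop κ c F ↔ ∀ y, x ≤ y → y ∈ F ∨ κ y = c := by
  constructor
  · rintro ⟨F', ⟨hF', hdiff⟩, hx⟩ y hxy
    exact or_iff_not_imp_left.2 fun hy ↦ hdiff ⟨hF' hx hxy, hy⟩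
  · intro h
    exact ⟨Set.Ici x, ⟨fun _ _ ↦ le_trans, fun y hy ↦ (h y hy.1).resolve_left hy.2⟩, le_rfl⟩

theorem mem_Rop_iff : x ∈ Rop κ c F ↔ ∃ y ≤ x, y ∈ F ∧ κ y ≠ c := by
  constructor
  · intro hx
    by_contra! h
    exact hx (Set.Iic x)ᶜ ⟨fun _ _ ha hab hb ↦ ha (hab.trans hb),
      fun y hy ↦ h y (not_not.1 hy.2) hy.1⟩ le_rfl
  · rintro ⟨y, hyx, hyF, hyc⟩ F' ⟨hF', hdiff⟩
    by_contra hx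
    exact hyc (hdiff ⟨hyF, fun hy ↦ hx (hF' hy hyx)⟩)

theorem isOrderFilter_Aop_diff_union_Rop [IsStronglyCoatomic α]
    (hκ : ∀ ⦃x y⦄, x ⋖ y → κ x ≠ κ y) (c : C) (F : Set α) :
    IsOrderFilter ((Aop κ c F \ F) ∪ Rop κ c F) := by
  rintro x y (⟨hxA, hxF⟩ | hxR) hxy
  · rw [mem_Aop_iff] at hxA
    by_cases hyF : y ∈ F
    · refine .inr (mem_Rop_iff.2 ?_)
      by_cases hyc : κ y = c
      · obtain ⟨z, hxz, hzy⟩ := (hxy.lt_of_ne fun h ↦ hxF (h ▸ hyF)).exists_le_covby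
        have hzc : κ z ≠ c := hyc ▸ hκ hzy
        exact ⟨z, hzy.le, (hxA z hxz).resolve_right hzc, hzc⟩
      · exact ⟨y, le_rfl, hyF, hyc⟩
    · exact .inl ⟨mem_Aop_iff.2 fun z hyz ↦ hxA z (hxy.trans hyz), hyF⟩
  · obtain ⟨z, hzx, hz⟩ := mem_Rop_iff.1 hxR
    exact .inr (mem_Rop_iff.2 ⟨z, hzx.trans hxy, hz⟩)

theorem Sop_eq_Aop_diff_union_Rop [IsStronglyCoatomic α]
    (hκ : ∀ ⦃x y⦄, x ⋖ y → κ x ≠ κ y) (c : C) (F : Set α) :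
    Sop κ c F = (Aop κ c F \ F) ∪ Rop κ c F :=
  if_pos (isOrderFilter_Aop_diff_union_Rop hκ c F)

theorem isOrderFilter_Sop [IsStronglyCoatomic α]
    (hκ : ∀ ⦃x y⦄, x ⋖ y → κ x ≠ κ y) (c : C) (F : Set α) : IsOrderFilter (Sop κ c F) := by
  rw [Sop_eq_Aop_diff_union_Rop hκ]
  exact isOrderFilter_Aop_diff_union_Rop hκ c F

theorem mem_Sop_iff_of_ne [IsStronglyCoatomic α] (hκ : ∀ ⦃x y⦄, x ⋖ y → κ x ≠ κ y)
    (hF : IsOrderFilter F) (hx : κ x ≠ c) : x ∈ Sop κ c F ↔ x ∈ F := by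
  rw [Sop_eq_Aop_diff_union_Rop hκ]
  constructor
  · rintro (⟨hxA, -⟩ | hxR)
    · exact (mem_Aop_iff.1 hxA x le_rfl).resolve_right hx
    · obtain ⟨y, hyx, hyF, -⟩ := mem_Rop_iff.1 hxR
      exact hF hyF hyx
  · exact fun hxF ↦ .inr (mem_Rop_iff.2 ⟨x, le_rfl, hxF, hx⟩)

/-- The set obtained from `F` by changing, simultaneously for all `x`, the membership of `x`:
an `x ∉ F` is put in when all its upper covers lie in `F`, and an `x ∈ F` is taken out when none
of its lower covers lies in `F`. It describes `Sop κ c F` on the elements of color `c`. -/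
def toggle (F : Set α) : Set α :=
  {x | (x ∉ F ∧ ∀ y, x ⋖ y → y ∈ F) ∨ (x ∈ F ∧ ∃ y, y ⋖ x ∧ y ∈ F)}

theorem mem_toggle_congr (hx : x ∈ F ↔ x ∈ G)
    (hxy : ∀ y, (SimpleGraph.hasse α).Adj x y → (y ∈ F ↔ y ∈ G)) :
    x ∈ toggle F ↔ x ∈ toggle G :=
  or_congr
    (and_congr hx.not <| forall₂_congr fun y hy ↦ hxy y (.inl hy))
    (and_congr hx <| exists_congr fun y ↦ and_congr_right fun hy ↦ hxy y (.inr hy))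

theorem mem_Aop_iff_forall_covBy [IsStronglyAtomic α] (hκ : ∀ ⦃x y⦄, x ⋖ y → κ x ≠ κ y)
    (hF : IsOrderFilter F) (hx : κ x = c) :
    x ∈ Aop κ c F ↔ ∀ y, x ⋖ y → y ∈ F := by
  rw [mem_Aop_iff]
  constructor
  · exact fun h y hxy ↦ (h y hxy.le).resolve_right (hx ▸ (hκ hxy).symm)
  · intro h y hxy
    obtain rfl | hlt := hxy.eq_or_lt
    · exact .inr hx
    · obtain ⟨z, hxz, hzy⟩ := hlt.exists_covby_le
      exact .inl (hF (h z hxz) hzy)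

theorem mem_Rop_iff_exists_covBy [IsStronglyCoatomic α] (hκ : ∀ ⦃x y⦄, x ⋖ y → κ x ≠ κ y)
    (hF : IsOrderFilter F) (hx : κ x = c) :
    x ∈ Rop κ c F ↔ ∃ y, y ⋖ x ∧ y ∈ F := by
  rw [mem_Rop_iff]
  constructor
  · rintro ⟨y, hyx, hyF, hyc⟩
    obtain ⟨z, hyz, hzx⟩ := (hyx.lt_of_ne fun h ↦ hyc (h ▸ hx)).exists_le_covby
    exact ⟨z, hzx, hF hyF hyz⟩
  · rintro ⟨y, hyx, hyF⟩
    exact ⟨y, hyx.le, hyF, hx ▸ hκ hyx⟩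

theorem mem_Sop_iff_mem_toggle [IsStronglyAtomic α] [IsStronglyCoatomic α]
    (hκ : ∀ ⦃x y⦄, x ⋖ y → κ x ≠ κ y) (hF : IsOrderFilter F) (hx : κ x = c) :
    x ∈ Sop κ c F ↔ x ∈ toggle F := by
  have mem_of_exists_covBy : (∃ y, y ⋖ x ∧ y ∈ F) → x ∈ F :=
    fun ⟨_, hyx, hyF⟩ ↦ hF hyF hyx.le
  rw [Sop_eq_Aop_diff_union_Rop hκ, Set.mem_union, Set.mem_sdiff,
    mem_Aop_iff_forall_covBy hκ hF hx, mem_Rop_iff_exists_covBy hκ hF hx]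
  exact or_congr and_comm (and_iff_right_of_imp mem_of_exists_covBy).symm

end OrderFilter

section NonadjacentColors

variable {α C : Type*} [PartialOrder α] [IsStronglyAtomic α] [IsStronglyCoatomic α]
  {κ : α → C} {D : SimpleGraph C} {k l : C} {F : Set α} {x : α}

theorem mem_Sop_Sop_iff_of_ne (hκ : ∀ ⦃x y⦄, x ⋖ y → D.Adj (κ x) (κ y)) (hkl : ¬D.Adj k l)
    (hF : IsOrderFilter F) (hx : κ x ≠ k) :
    x ∈ Sop κ l (Sop κ k F) ↔ x ∈ Sop κ l F := by
  have hκ_ne : ∀ ⦃x y⦄, x ⋖ y → κ x ≠ κ y := fun _ _ h ↦ (hκ h).ne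
  have hF' := isOrderFilter_Sop hκ_ne k F
  have mem_iff : x ∈ Sop κ k F ↔ x ∈ F := mem_Sop_iff_of_ne hκ_ne hF hx
  obtain rfl | hxl := eq_or_ne (κ x) l
  · rw [mem_Sop_iff_mem_toggle hκ_ne hF' rfl, mem_Sop_iff_mem_toggle hκ_ne hF rfl]
    refine mem_toggle_congr mem_iff fun y hxy ↦ mem_Sop_iff_of_ne hκ_ne hF ?_
    rintro rfl
    exact hkl (hxy.elim (fun h ↦ (hκ h).symm) fun h ↦ hκ h)
  · rw [mem_Sop_iff_of_ne hκ_ne hF' hxl, mem_Sop_iff_of_ne hκ_ne hF hxl, mem_iff]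

theorem mem_Sop_Sop_comm_of_ne (hκ : ∀ ⦃x y⦄, x ⋖ y → D.Adj (κ x) (κ y)) (hkl : ¬D.Adj k l)
    (hF : IsOrderFilter F) (hx : κ x ≠ k) :
    x ∈ Sop κ k (Sop κ l F) ↔ x ∈ Sop κ l (Sop κ k F) := by
  have hκ_ne : ∀ ⦃x y⦄, x ⋖ y → κ x ≠ κ y := fun _ _ h ↦ (hκ h).ne
  rw [mem_Sop_iff_of_ne hκ_ne (isOrderFilter_Sop hκ_ne l F) hx,
    mem_Sop_Sop_iff_of_ne hκ hkl hF hx]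

theorem Sop_comm_general (hκ : ∀ ⦃x y⦄, x ⋖ y → D.Adj (κ x) (κ y)) (hkl : ¬D.Adj k l)
    (hF : IsOrderFilter F) : Sop κ k (Sop κ l F) = Sop κ l (Sop κ k F) := by
  obtain rfl | hne := eq_or_ne k l
  · rfl
  ext x
  by_cases hxk : κ x = k
  · have hxl : κ x ≠ l := hxk ▸ hne
    exact (mem_Sop_Sop_comm_of_ne hκ (fun h ↦ hkl h.symm) hF hxl).symm
  · exact mem_Sop_Sop_comm_of_ne hκ hkl hF hxk

end NonadjacentColors

theorem hasse_int_adj_iff {a b : ℤ} : (SimpleGraph.hasse ℤ).Adj a b ↔ |a - b| = 1 := by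
  rw [SimpleGraph.hasse_adj, Order.covBy_iff_add_one_eq, Order.covBy_iff_add_one_eq]
  grind

theorem YD_covBy_iff {m N : ℕ} {x y : YD m N} :
    x ⋖ y ↔
      (((OrderDual.ofDual y.1 : Fin m) : ℕ) + 1 = (OrderDual.ofDual x.1 : Fin m) ∧ x.2 = y.2) ∨
      (((OrderDual.ofDual y.2 : Fin N) : ℕ) + 1 = (OrderDual.ofDual x.2 : Fin N) ∧ x.1 = y.1) := by
  rw [Prod.covBy_iff, ← ofDual_covBy_ofDual_iff, ← ofDual_covBy_ofDual_iff, Fin.covBy_iff,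
    Fin.covBy_iff, Nat.covBy_iff_add_one_eq, Nat.covBy_iff_add_one_eq]

theorem hasse_int_adj_ykappa_of_covBy {m N : ℕ} ⦃x y : YD m N⦄ (hxy : x ⋖ y) :
    (SimpleGraph.hasse ℤ).Adj (ykappa m N x) (ykappa m N y) := by
  rw [hasse_int_adj_iff, ykappa, ykappa]
  obtain ⟨h, h'⟩ | ⟨h, h'⟩ := YD_covBy_iff.1 hxy <;> rw [h', ← h] <;> simp

/-- Commutation relation: for colors `k, l ∈ {1,…,n}` with `|k − l| ≥ 2` and any order
filter `F` of `Y_{m,n−m+1}`, `S_k(S_l(F)) = S_l(S_k(F))`. -/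
theorem Sop_comm (n m : ℕ) (hm : 1 ≤ m) (hmn : m ≤ n)
    (k l : ℤ) (hk1 : 1 ≤ k) (hkn : k ≤ n) (hl1 : 1 ≤ l) (hln : l ≤ n)
    (hkl : 2 ≤ |k - l|)
    (F : Set (YD m (n - m + 1))) (hF : IsOrderFilter F) :
    Sop (ykappa m (n - m + 1)) k (Sop (ykappa m (n - m + 1)) l F) =
      Sop (ykappa m (n - m + 1)) l (Sop (ykappa m (n - m + 1)) k F) :=
  Sop_comm_general hasse_int_adj_ykappa_of_covBy (by rw [hasse_int_adj_iff]; omega) hF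
end

section
/- Let n = 2N be even, fix m with 1 ≤ m ≤ n, and let P := Y_{m,n−m+1} with I-coloring κ((i,j)) := j − i + m and J-coloring κ̃((i,j)) := the orbit of κ((i,j)) under k ↦ n+1−k. Let p := {N, N+1} ∈ J (the unique orbit not satisfying the orthogonality condition). Then for every order filter F of P, S̃_p(F) = S_N(S_{N+1}(S_N(F))) = S_{N+1}(S_N(S_{N+1}(F))). -/
/-- The `J`-coloring of `Y_{m, n−m+1}`: the orbit of the color `κ((i,j)) = j − i + m`
under the Dynkin diagram involution `k ↦ n+1−k`, encoded by its minimal element, i.e.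
`κ̃((i,j)) = min{ j−i+m , i−j+n−m+1 }`. -/
def ytkappa (n m N : ℕ) (x : YD m N) : ℤ :=
  min (ykappa m N x) ((n : ℤ) + 1 - ykappa m N x)

/-!
An order filter of the rectangle is bounded by a lattice path, and a colour class is a diagonal of
the rectangle.  If `κ` merges the colours `l, …, u` into one, then `A` and `R` are bounded by the
highest and the lowest lattice path that agree with the given one off the band of diagonals
`l, …, u`.  For a band of width one or two it follows that `S` reverses the order of the steps of
the path inside the band.  So `S_c` swaps two adjacent steps, `S̃` reverses three consecutive steps,
and both equalities say that the longest element of the symmetric group on three letters is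
`s₁ s₂ s₁ = s₂ s₁ s₂`.
-/

lemma exists_eq_Iio_of_isLowerSet {s : Set ℤ} (hs : IsLowerSet s) (hne : s.Nonempty)
    (hbdd : BddAbove s) : ∃ a, s = Set.Iio a := by
  refine ⟨sSup s + 1, Set.ext fun i => ?_⟩
  rw [Set.mem_Iio, Int.lt_add_one_iff]
  exact ⟨le_csSup hbdd, fun hi => hs hi (Int.csSup_mem hne hbdd)⟩

namespace YD

variable {m K : ℕ}

/-- The row of a cell as an integer, counted from `0`. -/
def row (p : YD m K) : ℤ := ((OrderDual.ofDual p.1 : Fin m) : ℤ)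

/-- The column of a cell as an integer, counted from `0`. -/
def col (p : YD m K) : ℤ := ((OrderDual.ofDual p.2 : Fin K) : ℤ)

lemma ykappa_eq (p : YD m K) : ykappa m K p = p.col - p.row + m := rfl

lemma row_nonneg (p : YD m K) : 0 ≤ p.row := Int.natCast_nonneg _

lemma col_nonneg (p : YD m K) : 0 ≤ p.col := Int.natCast_nonneg _

lemma row_lt (p : YD m K) : p.row < m := Int.ofNat_lt.2 (OrderDual.ofDual p.1).isLt

lemma col_lt (p : YD m K) : p.col < K := Int.ofNat_lt.2 (OrderDual.ofDual p.2).isLt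

lemma le_iff_row_col {p q : YD m K} : p ≤ q ↔ q.row ≤ p.row ∧ q.col ≤ p.col := by
  simp only [row, col, Prod.le_def, Nat.cast_le, Fin.val_fin_le, OrderDual.ofDual_le_ofDual]

lemma exists_row_col_eq {i j : ℤ} (hi : 0 ≤ i) (him : i < m) (hj : 0 ≤ j) (hjK : j < K) :
    ∃ p : YD m K, p.row = i ∧ p.col = j :=
  ⟨(OrderDual.toDual ⟨i.toNat, by lia⟩, OrderDual.toDual ⟨j.toNat, by lia⟩),
    Int.toNat_of_nonneg hi, Int.toNat_of_nonneg hj⟩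

/-- The cells lying before the threshold row `t k` on each diagonal `k` of the rectangle. -/
def below (m K : ℕ) (t : ℤ → ℤ) : Set (YD m K) := {p | p.row < t (ykappa m K p)}

lemma mem_below {t : ℤ → ℤ} {p : YD m K} : p ∈ below m K t ↔ p.row < t (ykappa m K p) := Iff.rfl

/-- `t` is the boundary of an order filter: a lattice path meeting each diagonal `k` in row `t k`.
Beyond the two corners of the rectangle the path is continued along the axes `j = 0` and `i = 0`,
so that the step conditions hold for all integers `k`. -/
structure IsBoundary (m K : ℕ) (t : ℤ → ℤ) : Prop where
  eq_sub_of_nonpos : ∀ k ≤ 0, t k = m - k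
  eq_zero_of_le : ∀ k, (m + K : ℤ) ≤ k → t k = 0
  succ_le : ∀ k, t (k + 1) ≤ t k
  le_succ_add_one : ∀ k, t k ≤ t (k + 1) + 1

namespace IsBoundary

variable {t r s : ℤ → ℤ}

lemma antitone (ht : IsBoundary m K t) : Antitone t :=
  antitone_int_of_succ_le ht.succ_le

lemma le_add_sub (ht : IsBoundary m K t) {k k' : ℤ} (h : k ≤ k') : t k ≤ t k' + (k' - k) := by
  have hmono : Monotone fun k => t k + k :=
    monotone_int_of_le_succ fun k => by have := ht.le_succ_add_one k; lia
  have : t k + k ≤ t k' + k' := hmono h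
  lia

lemma isOrderFilter_below (ht : IsBoundary m K t) : IsOrderFilter (below m K t) := by
  intro p q hp hpq
  obtain ⟨hrow, hcol⟩ := le_iff_row_col.1 hpq
  rw [mem_below, ykappa_eq] at hp ⊢
  have h₁ : t (p.col - p.row + m) ≤ t (q.col - p.row + m) := ht.antitone (by lia)
  have h₂ := ht.le_add_sub (show q.col - p.row + m ≤ q.col - q.row + m by lia)
  lia

-- The cell of diagonal `k` in row `a - 1` would violate `h` if `b < a`; the two boundaries
-- guarantee that it lies in the rectangle.
lemma le_of_forall_row_lt (hr : IsBoundary m K r) (hs : IsBoundary m K s) {k a b : ℤ}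
    (ha : a ≤ r k) (hb : s k ≤ b)
    (h : ∀ p : YD m K, ykappa m K p = k → p.row < a → p.row < b) : a ≤ b := by
  by_contra! hab
  have hk₀ : 0 < k := by
    by_contra! hk
    have := hr.eq_sub_of_nonpos k hk
    have := hs.eq_sub_of_nonpos k hk
    lia
  have hk₁ : k < m + K := by
    by_contra! hk
    have := hr.eq_zero_of_le k hk
    have := hs.eq_zero_of_le k hk
    lia
  have hr₀ : r k ≤ m := (hr.antitone hk₀.le).trans_eq (by simp [hr.eq_sub_of_nonpos])
  have hr₁ : r k ≤ m + K - k := (hr.le_add_sub hk₁.le).trans_eq (by simp [hr.eq_zero_of_le])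
  have hs₀ : m - k ≤ s k := by
    have := hs.le_add_sub hk₀.le
    rw [hs.eq_sub_of_nonpos 0 le_rfl] at this
    lia
  have hs₁ : 0 ≤ s k := (hs.eq_zero_of_le _ le_rfl).symm.le.trans (hs.antitone hk₁.le)
  obtain ⟨p, hrow, hcol⟩ := exists_row_col_eq (m := m) (K := K) (i := a - 1) (j := a - 1 + k - m)
    (by lia) (by lia) (by lia) (by lia)
  have := h p (by rw [ykappa_eq]; lia) (by lia)
  lia

end IsBoundary

/-- The extension of `F` by all integer points with a negative coordinate. For an order filter `F`
this turns membership of neighbouring cells into a condition without boundary cases. -/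
def extension (F : Set (YD m K)) : Set (ℤ × ℤ) :=
  {x | x.1 < 0 ∨ x.2 < 0 ∨ ∃ p ∈ F, p.row = x.1 ∧ p.col = x.2}

lemma isLowerSet_extension {F : Set (YD m K)} (hF : IsOrderFilter F) :
    IsLowerSet (extension F) := by
  rintro ⟨i, j⟩ ⟨i', j'⟩ ⟨hi : i' ≤ i, hj : j' ≤ j⟩ (h : i < 0 ∨ j < 0 ∨ _)
  rcases h with h | h | ⟨p, hp, rfl : p.row = i, rfl : p.col = j⟩
  · exact Or.inl (hi.trans_lt h)
  · exact Or.inr (Or.inl (hj.trans_lt h))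
  by_cases hi₀ : i' < 0
  · exact Or.inl hi₀
  by_cases hj₀ : j' < 0
  · exact Or.inr (Or.inl hj₀)
  obtain ⟨q, rfl, rfl⟩ := exists_row_col_eq (not_lt.1 hi₀) (hi.trans_lt p.row_lt)
    (not_lt.1 hj₀) (hj.trans_lt p.col_lt)
  exact Or.inr (Or.inr ⟨q, hF hp (le_iff_row_col.2 ⟨hi, hj⟩), rfl, rfl⟩)

lemma lt_of_mem_extension {F : Set (YD m K)} {i j : ℤ} (h : (i, j) ∈ extension F) (hi : 0 ≤ i)
    (hj : 0 ≤ j) : i < m ∧ j < K := by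
  rcases h with h | h | ⟨p, -, rfl : p.row = i, rfl : p.col = j⟩
  · exact absurd h hi.not_gt
  · exact absurd h hj.not_gt
  · exact ⟨p.row_lt, p.col_lt⟩

lemma row_col_mem_extension_iff {F : Set (YD m K)} (hF : IsOrderFilter F) {p : YD m K} :
    (p.row, p.col) ∈ extension F ↔ p ∈ F := by
  refine ⟨?_, fun hp => Or.inr (Or.inr ⟨p, hp, rfl, rfl⟩)⟩
  rintro (h | h | ⟨q, hq, hrow : q.row = p.row, hcol : q.col = p.col⟩)
  · exact absurd h p.row_nonneg.not_gt
  · exact absurd h p.col_nonneg.not_gt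
  · exact hF hq (le_iff_row_col.2 ⟨hrow.ge, hcol.ge⟩)

lemma exists_diagonal_threshold {F : Set (YD m K)} (hF : IsOrderFilter F) (k : ℤ) :
    ∃ a : ℤ, ∀ i, (i, i + k - m) ∈ extension F ↔ i < a := by
  have hlower : IsLowerSet {i : ℤ | (i, i + k - m) ∈ extension F} := fun i i' hi h =>
    isLowerSet_extension hF (Prod.mk_le_mk.2 ⟨hi, by lia⟩) h
  have hbdd : BddAbove {i : ℤ | (i, i + k - m) ∈ extension F} := by
    refine ⟨max m (m - k), fun i hi => ?_⟩
    by_contra! hlt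
    have := (lt_of_mem_extension hi (by lia) (by lia)).1
    lia
  obtain ⟨a, ha⟩ := exists_eq_Iio_of_isLowerSet hlower ⟨-1, Or.inl (by simp)⟩ hbdd
  exact ⟨a, fun i => Set.ext_iff.1 ha i⟩

lemma isBoundary_of_mem_extension_iff {F : Set (YD m K)} (hF : IsOrderFilter F) {t : ℤ → ℤ}
    (ht : ∀ k i : ℤ, (i, i + k - m) ∈ extension F ↔ i < t k) : IsBoundary m K t where
  eq_sub_of_nonpos k hk := by
    have h₁ := (ht k (m - k - 1)).1 (Or.inr (Or.inl (by lia)))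
    have h₂ : ¬ m - k < t k := fun h => by
      have := lt_of_mem_extension ((ht k _).2 h) (by lia) (by lia)
      lia
    lia
  eq_zero_of_le k hk := by
    have h₁ := (ht k (-1)).1 (Or.inl (by lia))
    have h₂ : ¬ 0 < t k := fun h => by
      have := lt_of_mem_extension ((ht k _).2 h) (by lia) (by lia)
      lia
    lia
  succ_le k := by
    have h := (ht (k + 1) (t (k + 1) - 1)).2 (by lia)
    have := (ht k _).1 (isLowerSet_extension hF (Prod.mk_le_mk.2 ⟨le_rfl, by lia⟩) h)
    lia
  le_succ_add_one k := by
    have h := (ht k (t k - 1)).2 (by lia)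
    have := (ht (k + 1) (t k - 2)).1
      (isLowerSet_extension hF (Prod.mk_le_mk.2 ⟨by lia, by lia⟩) h)
    lia

lemma exists_isBoundary_eq_below {F : Set (YD m K)} (hF : IsOrderFilter F) :
    ∃ t, IsBoundary m K t ∧ F = below m K t := by
  choose t ht using exists_diagonal_threshold hF
  refine ⟨t, isBoundary_of_mem_extension_iff hF ht, Set.ext fun p => ?_⟩
  rw [mem_below, ← ht, ← row_col_mem_extension_iff hF,
    show p.row + ykappa m K p - m = p.col by rw [ykappa_eq]; ring]

lemma IsBoundary.of_isOrderFilter_below {r s t : ℤ → ℤ} (hr : IsBoundary m K r)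
    (hs : IsBoundary m K s) (hrt : r ≤ t) (hts : t ≤ s) (h : IsOrderFilter (below m K t)) :
    IsBoundary m K t := by
  obtain ⟨v, hv, heq⟩ := exists_isBoundary_eq_below h
  have hmem (p : YD m K) : p.row < t (ykappa m K p) ↔ p.row < v (ykappa m K p) :=
    Set.ext_iff.1 heq p
  have : t = v := funext fun k => le_antisymm
    (hs.le_of_forall_row_lt hv (hts k) le_rfl fun p hp => hp ▸ (hmem p).1)
    (hv.le_of_forall_row_lt hr le_rfl (hrt k) fun p hp => hp ▸ (hmem p).2)
  exact this ▸ hv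

/-- The highest lattice path that agrees with `t` off the diagonals `l, …, u`. -/
def raise (t : ℤ → ℤ) (l u k : ℤ) : ℤ :=
  if l ≤ k ∧ k ≤ u then min (t (l - 1)) (t (u + 1) + (u + 1 - k)) else t k

/-- The lowest lattice path that agrees with `t` off the diagonals `l, …, u`. -/
def lower (t : ℤ → ℤ) (l u k : ℤ) : ℤ :=
  if l ≤ k ∧ k ≤ u then max (t (u + 1)) (t (l - 1) - (k - (l - 1))) else t k

/-- On each diagonal, the reflection of `t` in the interval from `lower t l u` to `raise t l u`. -/
def reflect (t : ℤ → ℤ) (l u k : ℤ) : ℤ := raise t l u k + lower t l u k - t k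

/-- The lattice path `t` with the order of its steps from diagonal `l - 1` to diagonal `u + 1`
reversed. -/
def reverse (t : ℤ → ℤ) (l u k : ℤ) : ℤ :=
  if l ≤ k ∧ k ≤ u then t (l - 1) + t (u + 1) - t (l + u - k) else t k

section Band

variable {t t' : ℤ → ℤ} {l u : ℤ}

lemma raise_of_notMem {k : ℤ} (hk : k ∉ Set.Icc l u) : raise t l u k = t k := if_neg hk

lemma lower_of_notMem {k : ℤ} (hk : k ∉ Set.Icc l u) : lower t l u k = t k := if_neg hk

lemma reverse_of_notMem {k : ℤ} (hk : k ∉ Set.Icc l u) : reverse t l u k = t k := if_neg hk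

lemma le_raise_of_forall (ht' : IsBoundary m K t') (h : ∀ k ∉ Set.Icc l u, t' k ≤ t k) :
    t' ≤ raise t l u := by
  intro k
  rw [raise]
  split_ifs with hk
  · have hl := h (l - 1) (by simp)
    have hu := h (u + 1) (by simp)
    have := ht'.antitone (show l - 1 ≤ k by lia)
    have := ht'.le_add_sub (show k ≤ u + 1 by lia)
    lia
  · exact h k hk

lemma lower_le_of_forall (ht' : IsBoundary m K t') (h : ∀ k ∉ Set.Icc l u, t k ≤ t' k) :
    lower t l u ≤ t' := by
  intro k
  rw [lower]
  split_ifs with hk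
  · have hl := h (l - 1) (by simp)
    have hu := h (u + 1) (by simp)
    have := ht'.antitone (show k ≤ u + 1 by lia)
    have := ht'.le_add_sub (show l - 1 ≤ k by lia)
    lia
  · exact h k hk

namespace IsBoundary

lemma le_raise (ht : IsBoundary m K t) : t ≤ raise t l u :=
  le_raise_of_forall ht fun _ _ => le_rfl

lemma lower_le (ht : IsBoundary m K t) : lower t l u ≤ t :=
  lower_le_of_forall ht fun _ _ => le_rfl

lemma of_eq_off_band (ht : IsBoundary m K t) (hl : 1 ≤ l) (hu : u < m + K)
    (heq : ∀ k ∉ Set.Icc l u, t' k = t k)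
    (hstep : ∀ k, l - 1 ≤ k → k ≤ u → t' (k + 1) ≤ t' k ∧ t' k ≤ t' (k + 1) + 1) :
    IsBoundary m K t' := by
  have hstep' (k : ℤ) : t' (k + 1) ≤ t' k ∧ t' k ≤ t' (k + 1) + 1 := by
    by_cases hk : l - 1 ≤ k ∧ k ≤ u
    · exact hstep k hk.1 hk.2
    · rw [heq k (by rw [Set.mem_Icc]; lia), heq (k + 1) (by rw [Set.mem_Icc]; lia)]
      exact ⟨ht.succ_le k, ht.le_succ_add_one k⟩
  refine ⟨fun k hk => ?_, fun k hk => ?_, fun k => (hstep' k).1, fun k => (hstep' k).2⟩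
  · rw [heq k (by rw [Set.mem_Icc]; lia), ht.eq_sub_of_nonpos k hk]
  · rw [heq k (by rw [Set.mem_Icc]; lia), ht.eq_zero_of_le k hk]

lemma raise (ht : IsBoundary m K t) (hl : 1 ≤ l) (hu : u < m + K) :
    IsBoundary m K (raise t l u) := by
  refine ht.of_eq_off_band hl hu (fun _ => raise_of_notMem) fun k hlk hku => ?_
  have := ht.antitone (show l - 1 ≤ u + 1 by lia)
  have := ht.le_add_sub (show l - 1 ≤ u + 1 by lia)
  grind [YD.raise]

lemma lower (ht : IsBoundary m K t) (hl : 1 ≤ l) (hu : u < m + K) :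
    IsBoundary m K (lower t l u) := by
  refine ht.of_eq_off_band hl hu (fun _ => lower_of_notMem) fun k hlk hku => ?_
  have := ht.antitone (show l - 1 ≤ u + 1 by lia)
  have := ht.le_add_sub (show l - 1 ≤ u + 1 by lia)
  grind [YD.lower]

lemma reverse (ht : IsBoundary m K t) (hl : 1 ≤ l) (hu : u < m + K) :
    IsBoundary m K (reverse t l u) := by
  refine ht.of_eq_off_band hl hu (fun _ => reverse_of_notMem) fun k hlk hku => ?_
  have := ht.succ_le (l + u - (k + 1))
  have := ht.le_succ_add_one (l + u - (k + 1))
  grind [YD.reverse]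

lemma reflect_of_isOrderFilter (ht : IsBoundary m K t) (hl : 1 ≤ l) (hu : u < m + K)
    (h : IsOrderFilter (below m K (reflect t l u))) : IsBoundary m K (reflect t l u) := by
  refine .of_isOrderFilter_below (ht.lower hl hu) (ht.raise hl hu) (fun k => ?_) (fun k => ?_) h
  · have := ht.le_raise (l := l) (u := u) k
    rw [reflect]
    lia
  · have := ht.lower_le (l := l) (u := u) k
    rw [reflect]
    lia

-- The only paths for which `reflect` and `reverse` differ have three steps in the band, of which
-- the middle one differs from the outer two. They are palindromes, and reflecting them yields a
-- double step.
lemma reverse_eq_reflect_or (ht : IsBoundary m K t) (hlu : u ≤ l + 1) :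
    YD.reverse t l u = reflect t l u ∨
      YD.reverse t l u = t ∧ ¬ IsBoundary m K (reflect t l u) := by
  have h₀ := ht.succ_le (l - 1)
  have h₁ := ht.succ_le l
  have h₂ := ht.succ_le (l + 1)
  have h₀' := ht.le_succ_add_one (l - 1)
  have h₁' := ht.le_succ_add_one l
  have h₂' := ht.le_succ_add_one (l + 1)
  by_cases hpal : u = l + 1 ∧ t (l - 1) - t l = t (l + 1) - t (l + 2) ∧
      t (l - 1) - t l ≠ t l - t (l + 1)
  · obtain ⟨rfl, houter, hmiddle⟩ := hpal
    refine Or.inr ⟨funext fun k => ?_, fun hreflect => ?_⟩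
    · grind [YD.reverse]
    · have := hreflect.succ_le l
      have := hreflect.le_succ_add_one l
      grind [reflect, YD.raise, YD.lower]
  · refine Or.inl (funext fun k => ?_)
    grind [YD.reverse, reflect, YD.raise, YD.lower]

end IsBoundary

variable {C : Type*} {κ : YD m K → C} {a : C}

lemma Aop_below (ht : IsBoundary m K t) (hl : 1 ≤ l) (hu : u < m + K)
    (hκ : κ ⁻¹' {a} = ykappa m K ⁻¹' Set.Icc l u) :
    Aop κ a (below m K t) = below m K (raise t l u) := by
  rw [Aop, hκ]
  apply Set.Subset.antisymm
  · refine Set.sUnion_subset fun F' ⟨hF', hsub⟩ => ?_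
    obtain ⟨t', ht', rfl⟩ := exists_isBoundary_eq_below hF'
    have hle : t' ≤ raise t l u := le_raise_of_forall ht' fun k hk =>
      ht'.le_of_forall_row_lt ht le_rfl le_rfl fun p hp hpt' => by
        by_contra hpt
        subst hp
        exact hk (hsub ⟨hpt', hpt⟩)
    exact fun p hp => lt_of_lt_of_le hp (hle _)
  · refine Set.subset_sUnion_of_mem ⟨(ht.raise hl hu).isOrderFilter_below, ?_⟩
    rintro p ⟨hp, hpt⟩
    by_contra hk
    rw [mem_below, raise_of_notMem hk] at hp
    exact hpt hp

lemma Rop_below (ht : IsBoundary m K t) (hl : 1 ≤ l) (hu : u < m + K)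
    (hκ : κ ⁻¹' {a} = ykappa m K ⁻¹' Set.Icc l u) :
    Rop κ a (below m K t) = below m K (lower t l u) := by
  rw [Rop, hκ]
  apply Set.Subset.antisymm
  · refine Set.sInter_subset_of_mem ⟨(ht.lower hl hu).isOrderFilter_below, ?_⟩
    rintro p ⟨hpt, hp⟩
    by_contra hk
    rw [mem_below, lower_of_notMem hk] at hp
    exact hp hpt
  · refine Set.subset_sInter fun F' ⟨hF', hsub⟩ => ?_
    obtain ⟨t', ht', rfl⟩ := exists_isBoundary_eq_below hF'
    have hle : lower t l u ≤ t' := lower_le_of_forall ht' fun k hk =>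
      ht.le_of_forall_row_lt ht' le_rfl le_rfl fun p hp hpt => by
        by_contra hpt'
        subst hp
        exact hk (hsub ⟨hpt, hpt'⟩)
    exact fun p hp => lt_of_lt_of_le hp (hle _)

lemma sdiff_union_below_eq_reflect (ht : IsBoundary m K t) (hlu : u ≤ l + 1) :
    below m K (raise t l u) \ below m K t ∪ below m K (lower t l u) =
      below m K (reflect t l u) := by
  ext p
  have hraise := ht.le_raise (l := l) (u := u) (ykappa m K p)
  have hlower := ht.lower_le (l := l) (u := u) (ykappa m K p)
  have hwidth : raise t l u (ykappa m K p) ≤ lower t l u (ykappa m K p) + 1 := by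
    rw [raise, lower]
    split_ifs <;> lia
  simp only [Set.mem_union, Set.mem_sdiff, mem_below, reflect]
  lia

lemma Sop_below (ht : IsBoundary m K t) (hl : 1 ≤ l) (hu : u < m + K) (hlu : u ≤ l + 1)
    (hκ : κ ⁻¹' {a} = ykappa m K ⁻¹' Set.Icc l u) :
    Sop κ a (below m K t) = below m K (reverse t l u) := by
  rw [Sop, Aop_below ht hl hu hκ, Rop_below ht hl hu hκ, sdiff_union_below_eq_reflect ht hlu]
  rcases ht.reverse_eq_reflect_or hlu with heq | ⟨heq, hnot⟩
  · rw [← heq, if_pos (ht.reverse hl hu).isOrderFilter_below]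
  · rw [heq, if_neg fun h => hnot (ht.reflect_of_isOrderFilter hl hu h)]

end Band

lemma Sop_ykappa_below {t : ℤ → ℤ} {c : ℤ} (ht : IsBoundary m K t) (hc : 1 ≤ c)
    (hcK : c < m + K) : Sop (ykappa m K) c (below m K t) = below m K (reverse t c c) :=
  Sop_below ht hc hcK (by lia) (by rw [Set.Icc_self])

lemma reverse_reverse_reverse_left (t : ℤ → ℤ) (c : ℤ) :
    reverse (reverse (reverse t c c) (c + 1) (c + 1)) c c = reverse t c (c + 1) := by
  funext k
  grind [reverse]

lemma reverse_reverse_reverse_right (t : ℤ → ℤ) (c : ℤ) :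
    reverse (reverse (reverse t (c + 1) (c + 1)) c c) (c + 1) (c + 1) = reverse t c (c + 1) := by
  funext k
  grind [reverse]

end YD

open YD in
theorem Sop_fold_nonorth_general {m K : ℕ} {C : Type*} {κ : YD m K → C} {a : C} {c : ℤ}
    (hc : 1 ≤ c) (hcK : c + 1 < m + K) (hκ : κ ⁻¹' {a} = ykappa m K ⁻¹' Set.Icc c (c + 1))
    {F : Set (YD m K)} (hF : IsOrderFilter F) :
    Sop κ a F = Sop (ykappa m K) c (Sop (ykappa m K) (c + 1) (Sop (ykappa m K) c F)) ∧
      Sop κ a F =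
        Sop (ykappa m K) (c + 1) (Sop (ykappa m K) c (Sop (ykappa m K) (c + 1) F)) := by
  obtain ⟨t, ht, rfl⟩ := exists_isBoundary_eq_below hF
  have hc' : 1 ≤ c + 1 := by lia
  have hcK' : c < m + K := by lia
  have h₁ := ht.reverse hc hcK'
  have h₂ := ht.reverse hc' hcK
  rw [Sop_below ht hc hcK le_rfl hκ]
  constructor
  · rw [Sop_ykappa_below ht hc hcK', Sop_ykappa_below h₁ hc' hcK,
      Sop_ykappa_below (h₁.reverse hc' hcK) hc hcK', reverse_reverse_reverse_left]
  · rw [Sop_ykappa_below ht hc' hcK, Sop_ykappa_below h₂ hc hcK',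
      Sop_ykappa_below (h₂.reverse hc hcK') hc' hcK, reverse_reverse_reverse_right]

/-- Let `n = 2N` be even and `p = {N, N+1}` the unique orbit of `k ↦ n+1−k` not
satisfying the orthogonality condition.  Then the folded operator `S̃_p` on order
filters of `Y_{m,n−m+1}` equals `S_N ∘ S_{N+1} ∘ S_N = S_{N+1} ∘ S_N ∘ S_{N+1}`.
Here `S̃_p` is the operator for the `J`-coloring `κ̃` at the orbit `p` (encoded by
its minimum `N`). -/
theorem Sop_fold_nonorth (N m : ℕ) (hN : 1 ≤ N) (hm : 1 ≤ m) (hmn : m ≤ 2 * N)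
    (F : Set (YD m (2 * N - m + 1))) (hF : IsOrderFilter F) :
    Sop (ytkappa (2 * N) m (2 * N - m + 1)) (N : ℤ) F =
        Sop (ykappa m (2 * N - m + 1)) (N : ℤ)
          (Sop (ykappa m (2 * N - m + 1)) ((N : ℤ) + 1)
            (Sop (ykappa m (2 * N - m + 1)) (N : ℤ) F)) ∧
      Sop (ytkappa (2 * N) m (2 * N - m + 1)) (N : ℤ) F =
        Sop (ykappa m (2 * N - m + 1)) ((N : ℤ) + 1)
          (Sop (ykappa m (2 * N - m + 1)) (N : ℤ)
            (Sop (ykappa m (2 * N - m + 1)) ((N : ℤ) + 1) F)) := by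
  refine Sop_fold_nonorth_general (by lia) (by lia) (Set.ext fun p => ?_) hF
  simp only [Set.mem_preimage, Set.mem_singleton_iff, Set.mem_Icc, ytkappa]
  lia
end

section
/- Fix integers n, m with 1 ≤ m ≤ (n+1)/2, let P := Y_{m,n−m+1} with I-coloring κ((i,j)) := j − i + m, and let Y be an order filter of P and k ∈ {1,…,n}. Then k ∉ 𝓘(Y) and k+1 ∈ 𝓘(Y) if and only if S_k(Y) ⊊ Y. -/
/-- The length `𝐤_i` of row `i` of a subset `Y` of `Y_{m,N}`:
the number of cells of `Y` in row `i`. -/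
noncomputable def rowLen (m N : ℕ) (Y : Set (YD m N)) (i : Fin m) : ℕ :=
  Set.ncard {j : Fin N | (OrderDual.toDual i, OrderDual.toDual j) ∈ Y}

/-- `𝓘(Y) := {𝐤_i + m + 1 − i : 1 ≤ i ≤ m} ⊆ {1,…,n+1}` (here the row index `i`
is 0-indexed, so the element for row `i` is `𝐤_i + m − i`). -/
def ISet (m N : ℕ) (Y : Set (YD m N)) : Set ℤ :=
  {z : ℤ | ∃ i : Fin m, z = (rowLen m N Y i : ℤ) + m - (i : ℤ)}

/-!
Suppose the endpoints of every cover relation have different colors. An element of a filter `F` is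
then removed by `R_c` exactly when it is a minimal element of `F` of color `c`, and an element is
added by `A_c` exactly when it is a maximal element of the complement of color `c`. Hence
`S_c(F) ⊊ F` means that some corner of color `c` can be removed from `F` and none can be added.

In a Young diagram the values `z_i = 𝐤_i + m - i` (rows indexed from `0`) strictly decrease with
`i`. A cell that can be added to row `i` has color `z_i`, so none has color `k` if `k ∉ 𝓘(Y)`. The
last cell of row `i` has color `z_i - 1`, and it is a removable corner iff row `i + 1` is shorter or
absent, that is, iff `z_i - 1 ∉ 𝓘(Y)`. The same condition forces row `i` to be nonempty, unless it
is the last row and `z_i = 1`.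
-/

section OrderFilter

variable {α C : Type*} [PartialOrder α] {κ : α → C} {c : C} {F : Set α} {x : α}

theorem isOrderFilter_iff_isUpperSet : IsOrderFilter F ↔ IsUpperSet F :=
  ⟨fun h _ _ hxy hx => h hx hxy, fun h _ _ hx hxy => h hxy hx⟩

theorem isOrderFilter_Rop : IsOrderFilter (Rop κ c F) :=
  fun _ _ hx hxy F' hF' => hF'.1 (hx F' hF') hxy

theorem Sop_ssubset_iff_Aop_subset_and_Rop_ssubset :
    Sop κ c F ⊂ F ↔ Aop κ c F ⊆ F ∧ Rop κ c F ⊂ F := by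
  by_cases hA : Aop κ c F ⊆ F
  · simp [Sop, Set.sdiff_eq_empty.mpr hA, isOrderFilter_Rop, hA]
  · have h_not_subset : ¬ (Aop κ c F \ F) ∪ Rop κ c F ⊆ F := fun h =>
      hA fun x hx => by_contra fun hxF => hxF (h (Or.inl ⟨hx, hxF⟩))
    simp only [hA, false_and, iff_false, Sop]
    split_ifs
    · exact fun h => h_not_subset h.subset
    · exact ssubset_irrefl F

namespace IsOrderFilter

theorem mem_Aop_iff (hF : IsOrderFilter F) :
    x ∈ Aop κ c F ↔ ∀ y, x ≤ y → y ∉ F → κ y = c := by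
  constructor
  · rintro ⟨F', ⟨hF', hcolor⟩, hx⟩ y hxy hy
    exact hcolor ⟨hF' hx hxy, hy⟩
  · intro h
    refine ⟨F ∪ Set.Ici x, ⟨?_, ?_⟩, Or.inr le_rfl⟩
    · rw [isOrderFilter_iff_isUpperSet] at hF ⊢
      exact hF.union (isUpperSet_Ici x)
    · rintro y ⟨hy | hxy, hyF⟩
      · exact absurd hy hyF
      · exact h y hxy hyF

theorem mem_Rop_iff (hF : IsOrderFilter F) :
    x ∈ Rop κ c F ↔ x ∈ F ∧ ∃ y ≤ x, y ∈ F ∧ κ y ≠ c := by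
  constructor
  · intro hx
    refine ⟨hx F ⟨hF, by simp⟩, ?_⟩
    by_contra! h
    have h_filter : IsOrderFilter (F \ Set.Iic x) := by
      rw [isOrderFilter_iff_isUpperSet] at hF ⊢
      exact hF.sdiff_of_isLowerSet (isLowerSet_Iic x)
    have hcolor : F \ (F \ Set.Iic x) ⊆ κ ⁻¹' {c} := by
      rw [Set.sdiff_sdiff_right_self]
      exact fun y ⟨hyF, hyx⟩ => h y hyx hyF
    exact (hx _ ⟨h_filter, hcolor⟩).2 le_rfl
  · rintro ⟨-, y, hyx, hyF, hy⟩ F' ⟨hF', hcolor⟩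
    have hyF' : y ∈ F' := by_contra fun hyF' => hy (hcolor ⟨hyF, hyF'⟩)
    exact hF' hyF' hyx

theorem Aop_subset_iff [IsStronglyAtomic α] (hF : IsOrderFilter F)
    (hκ : ∀ ⦃x y : α⦄, x ⋖ y → κ x ≠ κ y) :
    Aop κ c F ⊆ F ↔ ∀ x, Maximal (· ∉ F) x → κ x ≠ c := by
  constructor
  · intro hA x hx hxc
    refine hx.prop (hA (hF.mem_Aop_iff.mpr fun y hxy hy => ?_))
    rwa [← hx.eq_of_le hy hxy]
  · intro h x hxA
    by_contra hxF
    rw [hF.mem_Aop_iff] at hxA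
    have hx : Maximal (· ∉ F) x := by
      refine maximal_iff_forall_gt.mpr ⟨hxF, fun y hxy hy => ?_⟩
      obtain ⟨z, hxz, hzy⟩ := exists_covBy_le_of_lt hxy
      have hzF : z ∉ F := fun hz => hy (hF hz hzy)
      exact hκ hxz ((hxA x le_rfl hxF).trans (hxA z hxz.le hzF).symm)
    exact h x hx (hxA x le_rfl hxF)

theorem Rop_ssubset_iff [IsStronglyCoatomic α] (hF : IsOrderFilter F)
    (hκ : ∀ ⦃x y : α⦄, x ⋖ y → κ x ≠ κ y) :
    Rop κ c F ⊂ F ↔ ∃ x, Minimal (· ∈ F) x ∧ κ x = c := by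
  constructor
  · intro hR
    obtain ⟨x, hxF, hxR⟩ := Set.exists_of_ssubset hR
    have hcolor : ∀ y ≤ x, y ∈ F → κ y = c := by
      simpa [hF.mem_Rop_iff, hxF] using hxR
    refine ⟨x, minimal_iff_forall_lt.mpr ⟨hxF, fun y hyx hy => ?_⟩, hcolor x le_rfl hxF⟩
    obtain ⟨z, hyz, hzx⟩ := exists_le_covBy_of_lt hyx
    exact hκ hzx ((hcolor z hzx.le (hF hy hyz)).trans (hcolor x le_rfl hxF).symm)
  · rintro ⟨x, hx, hxc⟩
    refine (Set.ssubset_iff_of_subset fun y hy => (hF.mem_Rop_iff.mp hy).1).mpr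
      ⟨x, hx.prop, fun hxR => ?_⟩
    obtain ⟨-, y, hyx, hyF, hy⟩ := hF.mem_Rop_iff.mp hxR
    exact hy (hx.eq_of_le hyF hyx ▸ hxc)

theorem Sop_ssubset_iff [IsStronglyAtomic α] [IsStronglyCoatomic α] (hF : IsOrderFilter F)
    (hκ : ∀ ⦃x y : α⦄, x ⋖ y → κ x ≠ κ y) :
    Sop κ c F ⊂ F ↔
      (∀ x, Maximal (· ∉ F) x → κ x ≠ c) ∧ ∃ x, Minimal (· ∈ F) x ∧ κ x = c := by
  rw [Sop_ssubset_iff_Aop_subset_and_Rop_ssubset, hF.Aop_subset_iff hκ, hF.Rop_ssubset_iff hκ]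

end IsOrderFilter

end OrderFilter

section YoungDiagram

open OrderDual

theorem mem_iff_lt_ncard_of_isLowerSet {N : ℕ} {s : Set (Fin N)} (hs : IsLowerSet s) (j : Fin N) :
    j ∈ s ↔ (j : ℕ) < s.ncard := by
  constructor
  · intro hj
    have h_subset : Set.Iic j ⊆ s := fun a ha => hs ha hj
    have h_card := Set.ncard_le_ncard h_subset
    rw [← Finset.coe_Iic, Set.ncard_coe_finset, Fin.card_Iic] at h_card
    exact h_card
  · contrapose!
    intro hj
    have h_subset : s ⊆ Set.Iio j := fun a ha => not_le.mp fun hja => hj (hs hja ha)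
    have h_card := Set.ncard_le_ncard h_subset
    rwa [← Finset.coe_Iio, Set.ncard_coe_finset, Fin.card_Iio] at h_card

variable {m N : ℕ}

theorem ykappa_ne_of_covBy ⦃x y : YD m N⦄ (hxy : x ⋖ y) : ykappa m N x ≠ ykappa m N y := by
  obtain ⟨i, j⟩ := x
  obtain ⟨i', j'⟩ := y
  rcases Prod.mk_covBy_mk_iff.mp hxy with ⟨hi, rfl⟩ | ⟨hj, rfl⟩
  · have hlt : ofDual i' < ofDual i := hi.lt
    simp only [ykappa]
    omega
  · have hlt : ofDual j' < ofDual j := hj.lt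
    simp only [ykappa]
    omega

variable {Y : Set (YD m N)} {i i' : Fin m} {j : Fin N} {k : ℤ}

theorem rowLen_le : rowLen m N Y i ≤ N :=
  (Set.ncard_le_card _).trans_eq (Nat.card_fin N)

namespace IsOrderFilter

theorem mem_iff_lt_rowLen (hY : IsOrderFilter Y) :
    (toDual i, toDual j) ∈ Y ↔ (j : ℕ) < rowLen m N Y i :=
  mem_iff_lt_ncard_of_isLowerSet
    (s := {j : Fin N | (toDual i, toDual j) ∈ Y}) (fun _ _ hba ha => hY ha ⟨le_rfl, hba⟩) j

theorem rowLen_antitone (hY : IsOrderFilter Y) : Antitone (rowLen m N Y) :=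
  fun _ _ h => Set.ncard_le_ncard fun _ ha => hY ha ⟨h, le_rfl⟩

theorem minimal_mem_iff (hY : IsOrderFilter Y) :
    Minimal (· ∈ Y) (toDual i, toDual j) ↔
      rowLen m N Y i = j + 1 ∧ ∀ i' > i, rowLen m N Y i' ≤ j := by
  constructor
  · intro h
    have hlt : (j : ℕ) < rowLen m N Y i := hY.mem_iff_lt_rowLen.mp h.prop
    constructor
    · by_contra hne
      have hle : rowLen m N Y i ≤ N := rowLen_le
      let next : Fin N := ⟨j + 1, by omega⟩
      have hnext : (toDual i, toDual next) ∈ Y :=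
        hY.mem_iff_lt_rowLen.mpr (Nat.lt_of_le_of_ne hlt (Ne.symm hne))
      have hj : next ≤ j := (h.le_of_le hnext ⟨le_rfl, Fin.le_def.mpr (Nat.le_succ _)⟩).2
      exact absurd hj (by simp [next, Fin.le_def])
    · intro i' hi
      by_contra! hj
      have hle : i' ≤ i := (h.le_of_le (hY.mem_iff_lt_rowLen.mpr hj) ⟨hi.le, le_rfl⟩).1
      exact hle.not_gt hi
  · rintro ⟨hi, hbelow⟩
    refine ⟨hY.mem_iff_lt_rowLen.mpr (by omega), ?_⟩
    rintro ⟨a, b⟩ hab ⟨hia, hjb⟩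
    have hb : ofDual b < rowLen m N Y (ofDual a) := hY.mem_iff_lt_rowLen.mp hab
    have hai : ofDual a ≤ i := by
      by_contra! hlt
      exact ((hbelow _ hlt).trans hjb).not_gt hb
    have hbj : ofDual b ≤ j := by
      rw [le_antisymm hai hia, hi] at hb
      exact Nat.lt_succ_iff.mp hb
    exact ⟨hai, hbj⟩

theorem mem_ISet_of_maximal_notMem (hY : IsOrderFilter Y) {x : YD m N}
    (hx : Maximal (· ∉ Y) x) : ykappa m N x ∈ ISet m N Y := by
  obtain ⟨i, j⟩ := x
  suffices rowLen m N Y (ofDual i) = ofDual j from ⟨ofDual i, by simp only [ykappa]; omega⟩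
  have hle : rowLen m N Y (ofDual i) ≤ ofDual j :=
    not_lt.mp (hY.mem_iff_lt_rowLen.not.mp hx.prop)
  by_contra hne
  have hlt : rowLen m N Y (ofDual i) < ofDual j := hle.lt_of_ne hne
  let pred : Fin N := ⟨ofDual j - 1, by omega⟩
  have hpred : (i, toDual pred) ∉ Y :=
    hY.mem_iff_lt_rowLen.not.mpr (Nat.le_sub_one_of_lt hlt).not_gt
  have hj : ofDual j ≤ pred :=
    (hx.le_of_ge hpred ⟨le_rfl, show pred ≤ ofDual j from Nat.sub_le _ 1⟩).2
  simp only [pred, Fin.le_def] at hj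
  omega

theorem rowLen_lt_of_notMem_ISet (hY : IsOrderFilter Y) (hk : k ∉ ISet m N Y)
    (hi : k + 1 = rowLen m N Y i + m - i) (hii' : i < i') :
    rowLen m N Y i' < rowLen m N Y i := by
  let next : Fin m := ⟨i + 1, by omega⟩
  have hne : rowLen m N Y next ≠ rowLen m N Y i := fun h =>
    hk ⟨next, by simp only [h, next]; omega⟩
  calc rowLen m N Y i' ≤ rowLen m N Y next := hY.rowLen_antitone (Nat.succ_le_of_lt hii')
    _ < rowLen m N Y i := (hY.rowLen_antitone (Nat.le_succ _)).lt_of_ne hne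

theorem rowLen_pos_of_notMem_ISet (hY : IsOrderFilter Y) (hk₀ : k ≠ 0) (hk : k ∉ ISet m N Y)
    (hi : k + 1 = rowLen m N Y i + m - i) : 0 < rowLen m N Y i := by
  by_contra! hzero
  have hnext : (i : ℕ) + 1 < m := by omega
  have hlt : rowLen m N Y ⟨i + 1, hnext⟩ < rowLen m N Y i :=
    hY.rowLen_lt_of_notMem_ISet hk hi (Nat.lt_succ_self _)
  omega

theorem exists_minimal_ykappa_eq_iff (hY : IsOrderFilter Y) (hk₀ : k ≠ 0) :
    (∃ x, Minimal (· ∈ Y) x ∧ ykappa m N x = k) ↔ k ∉ ISet m N Y ∧ k + 1 ∈ ISet m N Y := by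
  constructor
  · rintro ⟨⟨i, j⟩, hx, rfl⟩
    obtain ⟨hi, hbelow⟩ :
        rowLen m N Y (ofDual i) = ofDual j + 1 ∧ ∀ a > ofDual i, rowLen m N Y a ≤ ofDual j :=
      hY.minimal_mem_iff.mp hx
    refine ⟨?_, ofDual i, by simp only [ykappa]; omega⟩
    rintro ⟨a, ha⟩
    simp only [ykappa] at ha
    rcases le_or_gt a (ofDual i) with hai | hia
    · have hle := hY.rowLen_antitone hai
      omega
    · have hle := hbelow a hia
      omega
  · rintro ⟨hk, i, hi⟩
    have hpos : 0 < rowLen m N Y i := hY.rowLen_pos_of_notMem_ISet hk₀ hk hi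
    have hle : rowLen m N Y i ≤ N := rowLen_le
    let last : Fin N := ⟨rowLen m N Y i - 1, by omega⟩
    refine ⟨(toDual i, toDual last), hY.minimal_mem_iff.mpr ⟨?_, fun a hia => ?_⟩, ?_⟩
    · exact (Nat.sub_add_cancel hpos).symm
    · exact Nat.le_sub_one_of_lt (hY.rowLen_lt_of_notMem_ISet hk hi hia)
    · simp only [ykappa, ofDual_toDual, last]
      omega

end IsOrderFilter

theorem ISet_iff_Sop_lt_general (hY : IsOrderFilter Y) (hk₀ : k ≠ 0) :
    (k ∉ ISet m N Y ∧ k + 1 ∈ ISet m N Y) ↔ Sop (ykappa m N) k Y ⊂ Y := by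
  rw [hY.Sop_ssubset_iff ykappa_ne_of_covBy, hY.exists_minimal_ykappa_eq_iff hk₀,
    iff_and_self]
  rintro ⟨hk, -⟩ x hx rfl
  exact hk (hY.mem_ISet_of_maximal_notMem hx)

end YoungDiagram

/-- For an order filter `Y` of `Y_{m,n−m+1}` and `k ∈ {1,…,n}`:
`k ∉ 𝓘(Y)` and `k+1 ∈ 𝓘(Y)` if and only if `S_k(Y) ⊊ Y`. -/
theorem ISet_iff_Sop_lt (n m : ℕ) (hm : 1 ≤ m) (hmn : 2 * m ≤ n + 1)
    (Y : Set (YD m (n - m + 1))) (hY : IsOrderFilter Y)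
    (k : ℤ) (hk1 : 1 ≤ k) (hkn : k ≤ n) :
    (k ∉ ISet m (n - m + 1) Y ∧ k + 1 ∈ ISet m (n - m + 1) Y) ↔
      Sop (ykappa m (n - m + 1)) k Y ⊂ Y :=
  ISet_iff_Sop_lt_general hY (by omega)
end
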